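/- arXiv:1411.3842 — 4 statements merged into one kernel-verified Lean document; each statement's English description precedes it below -/
import Mathlib

section
/- Let K ⊂ ℝ² be an o-symmetric convex body with o in its interior and K ⊆ B². Let p, q ∈ ∂K with ‖p‖ = ‖q‖ = 1, and suppose the angle between the vectors p and q equals 2α with 2α ∈ (0, π/2]. Let S = {t·p + s·q : t, s ≥ 0}. Then V(K ∩ S) + V(K* ∩ S) ≤ 2α. -/
/-!
Let `β = 2α`, choose coordinates in which `p = (1, 0)` and `q = (cos β, sin β)`, and let
`h θ = max {⟨x, (cos θ, sin θ)⟩ : x ∈ K}` be the support function of `K`. The bound is the sum of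
three estimates on `[0, β]`.

* In polar coordinates `K* ∩ S` lies in `{r ≤ 1 / h θ}`, so `V(K* ∩ S) ≤ ½ ∫ h⁻²`.
* Likewise `K ∩ S` lies in `{r ≤ h θ}`, a region of area `½ ∫ h²`. That region also contains, for
  almost every `θ`, the open segment on the supporting line of direction `θ` between the foot of the
  perpendicular from the origin and the contact point. These segments avoid `K`, are pairwise
  disjoint, and sweep out the area `½ ∫ h'²` (change of variables with Jacobian `|h' - t|`). Hence
  `V(K ∩ S) + ½ ∫ h'² ≤ ½ ∫ h²`.
* Finally `∫ (h⁻¹ - h)² ≤ ∫ h'²`; since `(h⁻¹ - h)² = h² + h⁻² - 2`, this is exactly what the first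
  two estimates leave to be shown.

The last inequality is proved by calibration in the variable `σ = (h⁻¹ - h) / 2`. With
`b² = t² - σ²`, where `t` is the maximum of `σ`,
`h'² - 4 σ² + 4 t² = 4 b |h'| + (2 b - |h'|)²`. Along each side of a minimum point of `h`, where `σ`
runs from `0` to `t`, the term `4 b |h'|` integrates to at least
`∫ s in 0..t, 4 √(t² - s²) (1 - s) = π t² - 4/3 t³`, and the square, bounded below because
`h² + h'² ≤ 1`, makes up for `4/3 t³`. The two sides together give
`∫ (h'² - 4 σ²) + 4 t² β ≥ 2 π t²`, and `β ≤ π / 2`.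
-/

open MeasureTheory Real
open scoped Pointwise RealInnerProductSpace ENNReal

noncomputable section

abbrev E2 := EuclideanSpace ℝ (Fin 2)

/-- The polar body `K* = {y : ⟪x,y⟫ ≤ 1 for all x ∈ K}`. -/
def polarBody (K : Set E2) : Set E2 := {y | ∀ x ∈ K, ⟪x, y⟫ ≤ 1}

open Set

/-! ### The weighted area under a quarter circle -/

lemma integral_sqrt_one_sub_sq_zero_one : ∫ x in (0 : ℝ)..1, √(1 - x ^ 2) = π / 4 := by
  have hint (a b : ℝ) : IntervalIntegrable (fun x : ℝ => √(1 - x ^ 2)) volume a b :=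
    Continuous.intervalIntegrable (by fun_prop) _ _
  have hsplit := intervalIntegral.integral_add_adjacent_intervals (hint (-1) 0) (hint 0 1)
  have heven : ∫ x in (-1 : ℝ)..0, √(1 - x ^ 2) = ∫ x in (0 : ℝ)..1, √(1 - x ^ 2) := by
    have := intervalIntegral.integral_comp_neg (a := 0) (b := 1) fun x : ℝ => √(1 - x ^ 2)
    simpa using this.symm
  rw [heven, integral_sqrt_one_sub_sq] at hsplit
  linarith

lemma integral_mul_sqrt_one_sub_sq : ∫ x in (0 : ℝ)..1, x * √(1 - x ^ 2) = 1 / 3 := by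
  have hderiv (x : ℝ) (hx : x ∈ Ioo (0 : ℝ) 1) :
      HasDerivAt (fun x => -(√(1 - x ^ 2)) ^ 3 / 3) (x * √(1 - x ^ 2)) x := by
    have hpos : 0 < 1 - x ^ 2 := by nlinarith [hx.1, hx.2]
    have := Real.sqrt_pos.2 hpos
    refine ((((((hasDerivAt_pow 2 x).const_sub 1).sqrt hpos.ne').pow 3).neg).div_const
      3).congr_deriv ?_
    push_cast
    field_simp
  rw [intervalIntegral.integral_eq_sub_of_hasDerivAt_of_le zero_le_one (by fun_prop) hderiv
    (Continuous.intervalIntegrable (by fun_prop) _ _)]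
  norm_num

lemma integral_sqrt_sq_sub_sq_mul_one_sub {t : ℝ} (ht : 0 ≤ t) :
    ∫ s in (0 : ℝ)..t, 4 * √(t ^ 2 - s ^ 2) * (1 - s) = π * t ^ 2 - 4 / 3 * t ^ 3 := by
  have hscale (x : ℝ) : 4 * √(t ^ 2 - (t * x) ^ 2) * (1 - t * x)
      = 4 * t * √(1 - x ^ 2) - 4 * t ^ 2 * (x * √(1 - x ^ 2)) := by
    rw [show t ^ 2 - (t * x) ^ 2 = t ^ 2 * (1 - x ^ 2) by ring, Real.sqrt_mul (sq_nonneg t),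
      Real.sqrt_sq ht]
    ring
  have hsubst := intervalIntegral.mul_integral_comp_mul_left (a := 0) (b := 1) (c := t)
    (f := fun s => 4 * √(t ^ 2 - s ^ 2) * (1 - s))
  simp only [mul_zero, mul_one, hscale] at hsubst
  rw [← hsubst, intervalIntegral.integral_sub (Continuous.intervalIntegrable (by fun_prop) _ _)
    (Continuous.intervalIntegrable (by fun_prop) _ _), intervalIntegral.integral_const_mul,
    intervalIntegral.integral_const_mul, integral_sqrt_one_sub_sq_zero_one,
    integral_mul_sqrt_one_sub_sq]
  ring

lemma integral_max_sub_zero_sq {a c : ℝ} (hc : 0 ≤ c) (hca : c ≤ a) :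
    ∫ θ in (0 : ℝ)..a, max (c - θ) 0 ^ 2 = c ^ 3 / 3 := by
  have hint (x y : ℝ) : IntervalIntegrable (fun θ => max (c - θ) 0 ^ 2) volume x y :=
    Continuous.intervalIntegrable (by fun_prop) _ _
  have hleft : ∫ θ in (0 : ℝ)..c, max (c - θ) 0 ^ 2 = ∫ θ in (0 : ℝ)..c, (c - θ) ^ 2 := by
    refine intervalIntegral.integral_congr fun θ hθ => ?_
    rw [uIcc_of_le hc] at hθ
    simp only [max_eq_left (sub_nonneg.2 hθ.2)]
  have hright : ∫ θ in c..a, max (c - θ) 0 ^ 2 = 0 := by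
    refine (intervalIntegral.integral_congr fun θ hθ => ?_).trans intervalIntegral.integral_zero
    rw [uIcc_of_le hca] at hθ
    simp only [max_eq_right (sub_nonpos.2 hθ.1), zero_pow two_ne_zero]
  rw [← intervalIntegral.integral_add_adjacent_intervals (hint 0 c) (hint c a), hleft, hright,
    intervalIntegral.integral_comp_sub_left fun x => x ^ 2]
  norm_num

/-! ### The calibration -/

/-- Half the gap between `x⁻¹` and `x`. For a support function `h ≤ 1`, the square of the gap
between `h⁻¹` and `h` is the excess of `h² + h⁻²` over `2`. -/
def halfGap (x : ℝ) : ℝ := (x⁻¹ - x) / 2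

lemma halfGap_one : halfGap 1 = 0 := by simp [halfGap]

lemma halfGap_eq {x : ℝ} (hx : x ≠ 0) : halfGap x = (1 - x ^ 2) / (2 * x) := by
  unfold halfGap
  field_simp

lemma halfGap_nonneg {x : ℝ} (hx0 : 0 < x) (hx1 : x ≤ 1) : 0 ≤ halfGap x := by
  have := (one_le_inv₀ hx0).2 hx1
  unfold halfGap
  linarith

lemma halfGap_le_halfGap {x y : ℝ} (hx : 0 < x) (hxy : x ≤ y) : halfGap y ≤ halfGap x := by
  unfold halfGap
  gcongr

lemma hasDerivAt_halfGap {x : ℝ} (hx : x ≠ 0) :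
    HasDerivAt halfGap (-((1 + (x ^ 2)⁻¹) / 2)) x := by
  refine (((hasDerivAt_inv hx).sub (hasDerivAt_id x)).div_const 2).congr_deriv ?_
  ring

lemma one_sub_halfGap_mul_le_one {x : ℝ} (hx0 : 0 < x) (hx1 : x ≤ 1) :
    (1 - halfGap x) * ((1 + (x ^ 2)⁻¹) / 2) ≤ 1 := by
  have hdiff : 1 - (1 - halfGap x) * ((1 + (x ^ 2)⁻¹) / 2)
      = (1 - x) ^ 3 * (1 + x) / (4 * x ^ 3) := by
    unfold halfGap
    field_simp
    ring
  have : 0 ≤ (1 - x) ^ 3 * (1 + x) / (4 * x ^ 3) := by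
    have := sub_nonneg.2 hx1
    positivity
  linarith

lemma eight_mul_halfGap_sq_le_one {x : ℝ} (hx0 : 0 < x) (hx1 : x ≤ 1) (hx2 : 1 ≤ 2 * x ^ 2) :
    8 * halfGap x ^ 2 ≤ 1 := by
  rw [halfGap_eq hx0.ne', div_pow, ← mul_div_assoc, div_le_one (by positivity)]
  nlinarith [sq_nonneg (1 - x ^ 2), pow_le_one₀ hx0.le hx1 (n := 2)]

-- The slopes `3/5` and `8/5` belong to the 3-4-5 triangle: `(4/5)² = 1 - (3/5)²`.
lemma halfGap_le_of_one_sub_sq_le {x t : ℝ} (hx : 0 < x) (ht0 : 0 ≤ t) (ht : 8 * t ^ 2 ≤ 1)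
    (hxt : 1 - x ^ 2 ≤ (8 / 5 * t) ^ 2) : halfGap x ≤ 3 / 5 * t := by
  rw [halfGap_eq hx.ne', div_le_iff₀ (by positivity)]
  rcases le_total (1 - x ^ 2) 0 with hneg | hnonneg
  · exact hneg.trans (by positivity)
  · refine abs_le_of_sq_le_sq' ?_ (by positivity) |>.2
    have : 1 - x ^ 2 ≤ 9 / 25 := by linarith
    calc (1 - x ^ 2) ^ 2 ≤ (1 - x ^ 2) * (8 / 5 * t) ^ 2 := by rw [sq]; gcongr
      _ ≤ (3 / 5 * t * (2 * x)) ^ 2 := by nlinarith [sq_nonneg t]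

-- With `b = √(t² - halfGap x²)`, this is `4 b |v| = v² + 4 b² - (2 b - |v|)²`, where the square is
-- bounded below by means of `|v| ≤ τ` and, while `τ ≤ 8/5 t`, of `b ≥ 4/5 t`.
lemma calibration_le {t x v τ : ℝ} (hx0 : 0 < x) (hx1 : x ≤ 1) (hxt : halfGap x ≤ t)
    (ht : 8 * t ^ 2 ≤ 1) (hxv : x ^ 2 + v ^ 2 ≤ 1) (hτ0 : 0 ≤ τ) (hτ : 1 - x ^ 2 ≤ τ ^ 2) :
    4 * √(t ^ 2 - halfGap x ^ 2) * |v| + max (8 / 5 * t - τ) 0 ^ 2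
      ≤ v ^ 2 - (x⁻¹ - x) ^ 2 + 4 * t ^ 2 := by
  have hgap : 0 ≤ halfGap x := halfGap_nonneg hx0 hx1
  have ht0 : 0 ≤ t := hgap.trans hxt
  set b := √(t ^ 2 - halfGap x ^ 2)
  have hb2 : b ^ 2 = t ^ 2 - halfGap x ^ 2 := Real.sq_sqrt (by nlinarith)
  have hcorr : max (8 / 5 * t - τ) 0 ^ 2 ≤ (2 * b - |v|) ^ 2 := by
    rcases le_total (8 / 5 * t) τ with hle | hle
    · rw [max_eq_right (sub_nonpos.2 hle), zero_pow two_ne_zero]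
      positivity
    · rw [max_eq_left (sub_nonneg.2 hle)]
      have hv : |v| ≤ τ := abs_le_of_sq_le_sq (by linarith) hτ0
      have hgap' : halfGap x ≤ 3 / 5 * t :=
        halfGap_le_of_one_sub_sq_le hx0 ht0 ht (hτ.trans (by gcongr))
      have hb' : 4 / 5 * t ≤ b := Real.le_sqrt_of_sq_le (by nlinarith)
      have : 8 / 5 * t - τ ≤ 2 * b - |v| := by linarith
      gcongr
  have hsq : (x⁻¹ - x) ^ 2 = 4 * halfGap x ^ 2 := by unfold halfGap; ring
  calc 4 * b * |v| + max (8 / 5 * t - τ) 0 ^ 2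
      ≤ 4 * b * |v| + (2 * b - |v|) ^ 2 := by gcongr
    _ = |v| ^ 2 + 4 * b ^ 2 := by ring
    _ = v ^ 2 - (x⁻¹ - x) ^ 2 + 4 * t ^ 2 := by rw [sq_abs, hb2, hsq]; ring

/-- The derivative in `x` of the calibration function
`∫ s in 0..halfGap x, 4 * √(t² - s²) * (1 - s)`. -/
def calibrationSlope (t x : ℝ) : ℝ :=
  4 * √(t ^ 2 - halfGap x ^ 2) * (1 - halfGap x) * -((1 + (x ^ 2)⁻¹) / 2)

lemma hasDerivAt_integral_halfGap (t : ℝ) {x : ℝ} (hx : x ≠ 0) :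
    HasDerivAt (fun x => ∫ s in (0 : ℝ)..halfGap x, 4 * √(t ^ 2 - s ^ 2) * (1 - s))
      (calibrationSlope t x) x := by
  have hprofile : Continuous fun s : ℝ => 4 * √(t ^ 2 - s ^ 2) * (1 - s) := by fun_prop
  exact (hprofile.integral_hasStrictDerivAt 0 (halfGap x)).hasDerivAt.comp x (hasDerivAt_halfGap hx)

lemma continuousOn_calibrationSlope (t : ℝ) {s : Set ℝ} (hs : ∀ x ∈ s, x ≠ 0) :
    ContinuousOn (calibrationSlope t) s := by
  have hgap : ContinuousOn halfGap s := fun x hx =>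
    (hasDerivAt_halfGap (hs x hx)).continuousAt.continuousWithinAt
  have hs2 : ∀ x ∈ s, x ^ 2 ≠ 0 := fun x hx => pow_ne_zero 2 (hs x hx)
  unfold calibrationSlope
  fun_prop (disch := exact hs2)

lemma calibrationSlope_mul_le {t x v : ℝ} (hx0 : 0 < x) (hx1 : x ≤ 1) (hgap : halfGap x ≤ 1) :
    calibrationSlope t x * v ≤ 4 * √(t ^ 2 - halfGap x ^ 2) * |v| := by
  set w := (1 - halfGap x) * ((1 + (x ^ 2)⁻¹) / 2)
  have hw1 : w ≤ 1 := one_sub_halfGap_mul_le_one hx0 hx1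
  have hw0 : 0 ≤ w := mul_nonneg (sub_nonneg.2 hgap) (by positivity)
  have hwv : w * -v ≤ |v| :=
    (mul_le_mul_of_nonneg_left (neg_le_abs v) hw0).trans
      (mul_le_of_le_one_left (abs_nonneg v) hw1)
  calc calibrationSlope t x * v = 4 * √(t ^ 2 - halfGap x ^ 2) * (w * -v) := by
        unfold calibrationSlope
        ring
    _ ≤ 4 * √(t ^ 2 - halfGap x ^ 2) * |v| := by gcongr

lemma calibrationSlope_mul_add_le {t x v τ : ℝ} (hx0 : 0 < x) (hx1 : x ≤ 1) (hxt : halfGap x ≤ t)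
    (ht : 8 * t ^ 2 ≤ 1) (hxv : x ^ 2 + v ^ 2 ≤ 1) (hτ0 : 0 ≤ τ) (hτ : 1 - x ^ 2 ≤ τ ^ 2) :
    calibrationSlope t x * v + max (8 / 5 * t - τ) 0 ^ 2 ≤ v ^ 2 - (x⁻¹ - x) ^ 2 + 4 * t ^ 2 :=
  (add_le_add_left (calibrationSlope_mul_le hx0 hx1 (by nlinarith)) _).trans
    (calibration_le hx0 hx1 hxt ht hxv hτ0 hτ)

/-! ### The energy inequality -/

section Lipschitz

variable {h : ℝ → ℝ} {C : NNReal}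

lemma intervalIntegrable_comp_mul_deriv {g : ℝ → ℝ} {s : Set ℝ} {a b : ℝ} (hg : ContinuousOn g s)
    (hh : LipschitzWith C h) (hmaps : MapsTo h (uIcc a b) s) :
    IntervalIntegrable (fun θ => g (h θ) * deriv h θ) volume a b :=
  hh.lipschitzOnWith.absolutelyContinuousOnInterval.intervalIntegrable_deriv.continuousOn_mul
    (hg.comp hh.continuous.continuousOn hmaps)

lemma integral_comp_mul_deriv_of_lipschitz {F F' : ℝ → ℝ} {m M a b : ℝ}
    (hF : ∀ x ∈ Icc m M, HasDerivAt F (F' x) x) (hF' : ContinuousOn F' (Icc m M))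
    (hh : LipschitzWith C h) (hmaps : MapsTo h (uIcc a b) (Icc m M)) :
    ∫ θ in a..b, F' (h θ) * deriv h θ = F (h b) - F (h a) := by
  obtain ⟨D, hD⟩ := isCompact_Icc.exists_bound_of_continuousOn hF'
  have hFlip : LipschitzOnWith D.toNNReal F (Icc m M) :=
    Convex.lipschitzOnWith_of_nnnorm_hasDerivWithin_le (convex_Icc m M)
      (fun x hx => (hF x hx).hasDerivWithinAt)
      fun x hx => NNReal.coe_le_coe.1 ((hD x hx).trans (Real.le_coe_toNNReal D))
  rw [← Function.comp_apply (f := F), ← Function.comp_apply (f := F) (x := a),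
    ← (hFlip.comp hh.lipschitzOnWith hmaps).absolutelyContinuousOnInterval.integral_deriv_eq_sub]
  refine intervalIntegral.integral_congr_ae ?_
  filter_upwards [hh.ae_differentiableAt_real] with θ hd hθ
  exact ((hF _ (hmaps (uIoc_subset_uIcc hθ))).comp θ hd.hasDerivAt).deriv.symm

lemma intervalIntegrable_deriv_sq (hh : LipschitzWith C h) (a b : ℝ) :
    IntervalIntegrable (fun θ => deriv h θ ^ 2) volume a b := by
  refine (intervalIntegrable_const (c := (C : ℝ) ^ 2)).mono_fun
    ((measurable_deriv h).pow_const 2).aestronglyMeasurable (.of_forall fun θ => ?_)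
  have := norm_deriv_le_of_lipschitz (x₀ := θ) hh
  simp only [norm_pow, NNReal.norm_eq]
  gcongr

lemma intervalIntegrable_inv_sub_self_sq {a b : ℝ} (hh : Continuous h)
    (hpos : ∀ θ ∈ uIcc a b, 0 < h θ) :
    IntervalIntegrable (fun θ => ((h θ)⁻¹ - h θ) ^ 2) volume a b := by
  have := hh.continuousOn (s := uIcc a b)
  have hne : ∀ θ ∈ uIcc a b, h θ ≠ 0 := fun θ hθ => (hpos θ hθ).ne'
  exact ContinuousOn.intervalIntegrable (by fun_prop (disch := exact hne))

lemma integral_calibrationSlope_comp (hh : LipschitzWith C h) {a : ℝ} (ha : 0 ≤ a)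
    (hmem : ∀ θ ∈ Icc 0 a, h θ ∈ Icc (h a) 1) (hpos : 0 < h a) (h0 : h 0 = 1) :
    ∫ θ in (0 : ℝ)..a, calibrationSlope (halfGap (h a)) (h θ) * deriv h θ
      = π * halfGap (h a) ^ 2 - 4 / 3 * halfGap (h a) ^ 3 := by
  have hne : ∀ x ∈ Icc (h a) 1, x ≠ 0 := fun x hx => (hpos.trans_le hx.1).ne'
  rw [integral_comp_mul_deriv_of_lipschitz
      (fun x hx => hasDerivAt_integral_halfGap (halfGap (h a)) (hne x hx))
      (continuousOn_calibrationSlope _ hne) hh (by rwa [uIcc_of_le ha]),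
    h0, halfGap_one, intervalIntegral.integral_same, sub_zero,
    integral_sqrt_sq_sub_sq_mul_one_sub (halfGap_nonneg hpos (hmem a ⟨ha, le_rfl⟩).2)]

lemma eight_fifths_mul_halfGap_le {a x : ℝ} (ha : 0 ≤ a) (hx : 0 < x) (hx2 : 1 ≤ 2 * x ^ 2)
    (hax : 1 - x ^ 2 ≤ a ^ 2) : 8 / 5 * halfGap x ≤ a := by
  rcases le_total 1 x with hx1 | hx1
  · have := halfGap_le_halfGap one_pos hx1
    rw [halfGap_one] at this
    linarith
  refine abs_le_of_sq_le_sq' (le_trans ?_ hax) ha |>.2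
  have hx3 : 0 ≤ 1 - x ^ 2 := by nlinarith
  calc (8 / 5 * halfGap x) ^ 2 = 16 / 25 * (1 - x ^ 2) ^ 2 / x ^ 2 := by
        rw [halfGap_eq hx.ne']
        field_simp
        ring
    _ ≤ 1 - x ^ 2 := by
        rw [div_le_iff₀ (by positivity)]
        nlinarith

-- The primitive of the calibration slope gains `π t² - 4/3 t³` from `h 0 = 1` to `h a`. The
-- missing cubic term comes from the angles `θ < 8/5 t`, at which `h` has not yet had room to fall
-- far below `1`.
lemma pi_mul_halfGap_sq_le_integral (hh : LipschitzWith C h) {a : ℝ} (ha : 0 ≤ a)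
    (hmem : ∀ θ ∈ Icc 0 a, h θ ∈ Icc (h a) 1) (hcos : ∀ θ ∈ Icc 0 a, cos θ ≤ h θ)
    (hpos : 0 < h a) (hm : 1 ≤ 2 * h a ^ 2) (hunit : ∀ᵐ θ, h θ ^ 2 + deriv h θ ^ 2 ≤ 1) :
    π * halfGap (h a) ^ 2
      ≤ ∫ θ in (0 : ℝ)..a, (deriv h θ ^ 2 - ((h θ)⁻¹ - h θ) ^ 2 + 4 * halfGap (h a) ^ 2) := by
  have h0 : h 0 = 1 := ((hmem 0 ⟨le_rfl, ha⟩).2).antisymm (cos_zero ▸ hcos 0 ⟨le_rfl, ha⟩)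
  have hm1 : h a ≤ 1 := (hmem a ⟨ha, le_rfl⟩).2
  have hpos' : ∀ θ ∈ Icc 0 a, 0 < h θ := fun θ hθ => hpos.trans_le (hmem θ hθ).1
  have hsq : ∀ θ ∈ Icc 0 a, 1 - h θ ^ 2 ≤ θ ^ 2 := fun θ hθ => by
    nlinarith [one_sub_sq_div_two_le_cos (x := θ), hcos θ hθ, sq_nonneg (h θ - 1)]
  set t := halfGap (h a)
  have ht0 : 0 ≤ t := halfGap_nonneg hpos hm1
  have ht8 : 8 * t ^ 2 ≤ 1 := eight_mul_halfGap_sq_le_one hpos hm1 hm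
  have hcap := integral_max_sub_zero_sq (c := 8 / 5 * t) (by positivity)
    (eight_fifths_mul_halfGap_le ha hpos hm (hsq a ⟨ha, le_rfl⟩))
  have hslope_int : IntervalIntegrable (fun θ => calibrationSlope t (h θ) * deriv h θ) volume 0 a :=
    intervalIntegrable_comp_mul_deriv (continuousOn_calibrationSlope t (s := Icc (h a) 1)
      fun x hx => (hpos.trans_le hx.1).ne') hh (by rwa [uIcc_of_le ha])
  have hcap_int : IntervalIntegrable (fun θ => max (8 / 5 * t - θ) 0 ^ 2) volume 0 a :=
    Continuous.intervalIntegrable (by fun_prop) _ _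
  calc π * t ^ 2 ≤ (π * t ^ 2 - 4 / 3 * t ^ 3) + (8 / 5 * t) ^ 3 / 3 := by
        nlinarith [pow_nonneg ht0 3]
    _ = ∫ θ in (0 : ℝ)..a,
          (calibrationSlope t (h θ) * deriv h θ + max (8 / 5 * t - θ) 0 ^ 2) := by
        rw [intervalIntegral.integral_add hslope_int hcap_int, hcap,
          integral_calibrationSlope_comp hh ha hmem hpos h0]
    _ ≤ ∫ θ in (0 : ℝ)..a, (deriv h θ ^ 2 - ((h θ)⁻¹ - h θ) ^ 2 + 4 * t ^ 2) := by
        refine intervalIntegral.integral_mono_ae_restrict ha (hslope_int.add hcap_int)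
          (((intervalIntegrable_deriv_sq hh 0 a).sub (intervalIntegrable_inv_sub_self_sq
            hh.continuous (by rwa [uIcc_of_le ha]))).add intervalIntegrable_const) ?_
        filter_upwards [ae_restrict_mem measurableSet_Icc, ae_restrict_of_ae hunit] with θ hθ hθ1
        exact calibrationSlope_mul_add_le (hpos' θ hθ) (hmem θ hθ).2
          (halfGap_le_halfGap hpos (hmem θ hθ).1) ht8 hθ1 hθ.1 (hsq θ hθ)

lemma pi_mul_halfGap_sq_le_integral_right (hh : LipschitzWith C h) {a b : ℝ} (hab : a ≤ b)
    (hmem : ∀ θ ∈ Icc a b, h θ ∈ Icc (h a) 1) (hcos : ∀ θ ∈ Icc a b, cos (b - θ) ≤ h θ)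
    (hpos : 0 < h a) (hm : 1 ≤ 2 * h a ^ 2) (hunit : ∀ᵐ θ, h θ ^ 2 + deriv h θ ^ 2 ≤ 1) :
    π * halfGap (h a) ^ 2
      ≤ ∫ θ in a..b, (deriv h θ ^ 2 - ((h θ)⁻¹ - h θ) ^ 2 + 4 * halfGap (h a) ^ 2) := by
  have hsub : b - (b - a) = a := sub_sub_cancel b a
  have hmaps : ∀ θ ∈ Icc 0 (b - a), b - θ ∈ Icc a b := fun θ hθ =>
    ⟨by linarith [hθ.2], by linarith [hθ.1]⟩
  have hlip : LipschitzWith C fun θ => h (b - θ) :=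
    mul_one C ▸ hh.comp (IsometryEquiv.subLeft b).isometry.lipschitz
  have hreflected := pi_mul_halfGap_sq_le_integral hlip (sub_nonneg.2 hab)
    (fun θ hθ => hsub.symm ▸ hmem _ (hmaps θ hθ))
    (fun θ hθ => by simpa only [sub_sub_cancel] using hcos _ (hmaps θ hθ))
    (hsub.symm ▸ hpos) (hsub.symm ▸ hm) (by
      filter_upwards [(volume.measurePreserving_sub_left b).quasiMeasurePreserving.ae hunit]
        with θ hθ
      rwa [deriv_comp_const_sub, neg_sq])
  simp only [deriv_comp_const_sub, neg_sq, hsub] at hreflected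
  rwa [intervalIntegral.integral_comp_sub_left (fun θ =>
    deriv h θ ^ 2 - ((h θ)⁻¹ - h θ) ^ 2 + 4 * halfGap (h a) ^ 2), hsub, sub_zero] at hreflected

lemma sqrt_two_div_two_le_of_cos_le {θ β x : ℝ} (hθ : θ ∈ Icc 0 β) (hβ : β ≤ π / 2)
    (hcos : cos θ ≤ x) (hcos' : cos (β - θ) ≤ x) : √2 / 2 ≤ x := by
  rw [← cos_pi_div_four]
  rcases le_total θ (π / 4) with hle | hle
  · exact (cos_le_cos_of_nonneg_of_le_pi hθ.1 (by linarith [pi_pos]) hle).trans hcos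
  · exact (cos_le_cos_of_nonneg_of_le_pi (by linarith [hθ.2]) (by linarith [pi_pos])
      (by linarith)).trans hcos'

theorem integral_inv_sub_self_sq_le_integral_deriv_sq (hh : LipschitzWith C h) {β : ℝ}
    (hβ0 : 0 ≤ β) (hβ : β ≤ π / 2) (hle : ∀ θ ∈ Icc 0 β, h θ ≤ 1)
    (hcos : ∀ θ ∈ Icc 0 β, cos θ ≤ h θ) (hcos' : ∀ θ ∈ Icc 0 β, cos (β - θ) ≤ h θ)
    (hunit : ∀ᵐ θ, h θ ^ 2 + deriv h θ ^ 2 ≤ 1) :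
    ∫ θ in (0 : ℝ)..β, ((h θ)⁻¹ - h θ) ^ 2 ≤ ∫ θ in (0 : ℝ)..β, deriv h θ ^ 2 := by
  obtain ⟨θ₀, hθ₀, hmin⟩ := isCompact_Icc.exists_isMinOn (nonempty_Icc.2 hβ0)
    hh.continuous.continuousOn
  have hleft_sub : Icc 0 θ₀ ⊆ Icc 0 β := Icc_subset_Icc_right hθ₀.2
  have hright_sub : Icc θ₀ β ⊆ Icc 0 β := Icc_subset_Icc_left hθ₀.1
  have hmem' : ∀ θ ∈ Icc 0 β, h θ ∈ Icc (h θ₀) 1 := fun θ hθ => ⟨hmin hθ, hle θ hθ⟩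
  have hsqrt := sqrt_two_div_two_le_of_cos_le hθ₀ hβ (hcos θ₀ hθ₀) (hcos' θ₀ hθ₀)
  have hpos : 0 < h θ₀ := lt_of_lt_of_le (by positivity) hsqrt
  have hsq : 1 ≤ 2 * h θ₀ ^ 2 := by
    nlinarith [Real.sq_sqrt (zero_le_two (α := ℝ)), mul_self_le_mul_self (by positivity) hsqrt]
  have hleft := pi_mul_halfGap_sq_le_integral hh hθ₀.1 (fun θ hθ => hmem' θ (hleft_sub hθ))
    (fun θ hθ => hcos θ (hleft_sub hθ)) hpos hsq hunit
  have hright := pi_mul_halfGap_sq_le_integral_right hh hθ₀.2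
    (fun θ hθ => hmem' θ (hright_sub hθ)) (fun θ hθ => hcos' θ (hright_sub hθ)) hpos hsq hunit
  have hderiv_int (a b : ℝ) := intervalIntegrable_deriv_sq hh a b
  have hgap_int {a b : ℝ} (hab : uIcc a b ⊆ Icc 0 β) :=
    intervalIntegrable_inv_sub_self_sq hh.continuous fun θ hθ => hpos.trans_le (hmin (hab hθ))
  have hgap_int₀ := hgap_int (uIcc_of_le hβ0).subset
  have henergy_int {a b : ℝ} (hab : uIcc a b ⊆ Icc 0 β) :=
    ((hderiv_int a b).sub (hgap_int hab)).add
      (intervalIntegrable_const (c := 4 * halfGap (h θ₀) ^ 2))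
  have hsum := intervalIntegral.integral_add_adjacent_intervals
    (henergy_int ((uIcc_of_le hθ₀.1).trans_subset hleft_sub))
    (henergy_int ((uIcc_of_le hθ₀.2).trans_subset hright_sub))
  rw [intervalIntegral.integral_add ((hderiv_int 0 β).sub hgap_int₀) intervalIntegrable_const,
    intervalIntegral.integral_sub (hderiv_int 0 β) hgap_int₀, intervalIntegral.integral_const,
    smul_eq_mul, sub_zero] at hsum
  have hβt : β * (4 * halfGap (h θ₀) ^ 2) ≤ π / 2 * (4 * halfGap (h θ₀) ^ 2) := by gcongr
  linarith

end Lipschitz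

/-! ### Radial and tangential components -/

/-- The component of `z` in the direction of angle `θ`. -/
def radial (z : ℂ) (θ : ℝ) : ℝ := z.re * cos θ + z.im * sin θ

/-- The component of `z` in the direction of angle `θ + π / 2`. -/
def tangential (z : ℂ) (θ : ℝ) : ℝ := z.im * cos θ - z.re * sin θ

lemma radial_eq_add (z : ℂ) (θ ψ : ℝ) :
    radial z ψ = radial z θ * cos (ψ - θ) + tangential z θ * sin (ψ - θ) := by
  simp only [radial, tangential, cos_sub, sin_sub]
  linear_combination -(z.re * cos ψ + z.im * sin ψ) * sin_sq_add_cos_sq θ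

lemma tangential_eq_sub (z : ℂ) (θ ψ : ℝ) :
    tangential z ψ = tangential z θ * cos (ψ - θ) - radial z θ * sin (ψ - θ) := by
  simp only [radial, tangential, cos_sub, sin_sub]
  linear_combination (z.re * sin ψ - z.im * cos ψ) * sin_sq_add_cos_sq θ

lemma radial_sq_add_tangential_sq (z : ℂ) (θ : ℝ) :
    radial z θ ^ 2 + tangential z θ ^ 2 = ‖z‖ ^ 2 := by
  rw [Complex.sq_norm, Complex.normSq_apply]
  simp only [radial, tangential]
  linear_combination (z.re ^ 2 + z.im ^ 2) * sin_sq_add_cos_sq θ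

lemma radial_arg (z : ℂ) : radial z z.arg = ‖z‖ := by
  rw [radial, ← Complex.norm_mul_cos_arg z, ← Complex.norm_mul_sin_arg z]
  linear_combination ‖z‖ * sin_sq_add_cos_sq z.arg

lemma tangential_arg (z : ℂ) : tangential z z.arg = 0 := by
  rw [tangential, ← Complex.norm_mul_cos_arg z, ← Complex.norm_mul_sin_arg z]
  ring

lemma radial_eq_norm_mul_cos (z : ℂ) (θ : ℝ) : radial z θ = ‖z‖ * cos (z.arg - θ) := by
  rw [radial_eq_add z z.arg, radial_arg, tangential_arg, zero_mul, add_zero, ← cos_neg, neg_sub]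

lemma tangential_eq_norm_mul_sin (z : ℂ) (θ : ℝ) : tangential z θ = ‖z‖ * sin (z.arg - θ) := by
  rw [tangential_eq_sub z z.arg, radial_arg, tangential_arg, zero_mul, zero_sub, ← mul_neg,
    ← sin_neg, neg_sub]

lemma radial_le_norm (z : ℂ) (θ : ℝ) : radial z θ ≤ ‖z‖ :=
  radial_eq_norm_mul_cos z θ ▸ mul_le_of_le_one_right (norm_nonneg z) (cos_le_one _)

lemma radial_exp_mul_I (ψ θ : ℝ) : radial (Complex.exp (ψ * Complex.I)) θ = cos (ψ - θ) := by
  rw [radial, Complex.exp_ofReal_mul_I_re, Complex.exp_ofReal_mul_I_im, cos_sub]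

lemma inner_eq_norm_mul_radial (w z : ℂ) : ⟪w, z⟫ = ‖z‖ * radial w z.arg := by
  rw [Complex.inner, Complex.mul_re, Complex.conj_re, Complex.conj_im,
    ← Complex.norm_mul_cos_arg z, ← Complex.norm_mul_sin_arg z, radial]
  ring

lemma hasDerivAt_radial (z : ℂ) (θ : ℝ) : HasDerivAt (radial z) (tangential z θ) θ := by
  refine (((hasDerivAt_cos θ).const_mul z.re).add
    ((hasDerivAt_sin θ).const_mul z.im)).congr_deriv ?_
  rw [tangential]
  ring

lemma lipschitzWith_radial (z : ℂ) : LipschitzWith ‖z‖₊ (radial z) :=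
  lipschitzWith_of_nnnorm_deriv_le (fun θ => (hasDerivAt_radial z θ).differentiableAt)
    fun θ => by
      rw [(hasDerivAt_radial z θ).deriv, ← NNReal.coe_le_coe, coe_nnnorm, coe_nnnorm, norm_eq_abs]
      exact abs_le_of_sq_le_sq (by nlinarith [radial_sq_add_tangential_sq z θ]) (norm_nonneg z)

lemma continuous_radial_left (θ : ℝ) : Continuous fun z => radial z θ := by
  unfold radial
  fun_prop

/-! ### Support functions -/

/-- The support function of `K`, in terms of the angle `θ` of the outer normal. It takes the junk
value `sSup ∅ = 0` when `K` is empty. -/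
def supportFn (K : Set ℂ) (θ : ℝ) : ℝ := sSup ((radial · θ) '' K)

section SupportFn

variable {K : Set ℂ} {R : NNReal} {z : ℂ} {θ ψ : ℝ}

lemma radial_le_supportFn (hK : IsCompact K) (hz : z ∈ K) (θ : ℝ) :
    radial z θ ≤ supportFn K θ :=
  le_csSup (hK.bddAbove_image (continuous_radial_left θ).continuousOn) (mem_image_of_mem _ hz)

lemma exists_radial_eq_supportFn (hK : IsCompact K) (hne : K.Nonempty) (θ : ℝ) :
    ∃ z ∈ K, radial z θ = supportFn K θ := by
  obtain ⟨z, hz, hmax, -⟩ := hK.exists_sSup_image_eq_and_ge hne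
    (continuous_radial_left θ).continuousOn
  exact ⟨z, hz, hmax.symm⟩

lemma supportFn_le (hK : IsCompact K) (hne : K.Nonempty) (hR : ∀ z ∈ K, ‖z‖ ≤ R) (θ : ℝ) :
    supportFn K θ ≤ R := by
  obtain ⟨z, hz, hzθ⟩ := exists_radial_eq_supportFn hK hne θ
  exact hzθ ▸ (radial_le_norm z θ).trans (hR z hz)

lemma cos_sub_le_supportFn (hK : IsCompact K) (hψ : Complex.exp (ψ * Complex.I) ∈ K) (θ : ℝ) :
    cos (ψ - θ) ≤ supportFn K θ :=
  radial_exp_mul_I ψ θ ▸ radial_le_supportFn hK hψ θ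

lemma cos_le_supportFn (hK : IsCompact K) (h1 : 1 ∈ K) (θ : ℝ) : cos θ ≤ supportFn K θ := by
  simpa using cos_sub_le_supportFn (ψ := 0) hK (by simpa using h1) θ

lemma lipschitzWith_supportFn (hK : IsCompact K) (hne : K.Nonempty) (hR : ∀ z ∈ K, ‖z‖ ≤ R) :
    LipschitzWith R (supportFn K) := by
  refine LipschitzWith.of_le_add_mul R fun θ ψ => ?_
  obtain ⟨z, hz, hzθ⟩ := exists_radial_eq_supportFn hK hne θ
  calc supportFn K θ = radial z θ := hzθ.symm
    _ ≤ radial z ψ + R * dist θ ψ :=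
      ((lipschitzWith_radial z).weaken (hR z hz)).le_add_mul θ ψ
    _ ≤ supportFn K ψ + R * dist θ ψ := by
      gcongr
      exact radial_le_supportFn hK hz ψ

lemma tangential_eq_deriv_supportFn (hK : IsCompact K) (hz : z ∈ K)
    (hd : DifferentiableAt ℝ (supportFn K) θ) (hcontact : radial z θ = supportFn K θ) :
    tangential z θ = deriv (supportFn K) θ := by
  have hmin : IsLocalMin (fun η => supportFn K η - radial z η) θ := .of_forall fun η => by
    beta_reduce
    rw [hcontact, sub_self]
    exact sub_nonneg.2 (radial_le_supportFn hK hz η)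
  have := hmin.hasDerivAt_eq_zero (hd.hasDerivAt.sub (hasDerivAt_radial z θ))
  linarith

lemma supportFn_sq_add_deriv_sq_le (hK : IsCompact K) (hne : K.Nonempty)
    (hR : ∀ z ∈ K, ‖z‖ ≤ R) (hd : DifferentiableAt ℝ (supportFn K) θ) :
    supportFn K θ ^ 2 + deriv (supportFn K) θ ^ 2 ≤ R ^ 2 := by
  obtain ⟨z, hz, hcontact⟩ := exists_radial_eq_supportFn hK hne θ
  rw [← tangential_eq_deriv_supportFn hK hz hd hcontact, ← hcontact,
    radial_sq_add_tangential_sq]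
  have := hR z hz
  gcongr

lemma radial_lt_supportFn (hK : IsCompact K) (hne : K.Nonempty)
    (hd : DifferentiableAt ℝ (supportFn K) θ) (hline : radial z θ = supportFn K θ)
    (hψ : (tangential z θ - deriv (supportFn K) θ) * sin (ψ - θ) < 0) :
    radial z ψ < supportFn K ψ := by
  -- The contact point `w` on the supporting line of direction `θ` is further out in direction `ψ`.
  obtain ⟨w, hw, hcontact⟩ := exists_radial_eq_supportFn hK hne θ
  refine lt_of_lt_of_le ?_ (radial_le_supportFn hK hw ψ)
  rw [radial_eq_add z θ, radial_eq_add w θ, hline, hcontact,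
    tangential_eq_deriv_supportFn hK hw hd hcontact]
  linarith

end SupportFn

/-! ### Areas in polar and tangential coordinates -/

lemma setLIntegral_fibers {α β : Type*} [MeasurableSpace α] [MeasurableSpace β] {μ : Measure α}
    {ν : Measure β} [SFinite μ] [SFinite ν] {D : Set (α × β)} {T : Set β} {s : β → Set α}
    (hD : ∀ x y, (x, y) ∈ D ↔ y ∈ T ∧ x ∈ s y) (hDm : MeasurableSet D) (hT : MeasurableSet T)
    {f : α × β → ℝ≥0∞} (hf : Measurable f) :
    ∫⁻ p in D, f p ∂μ.prod ν = ∫⁻ y in T, ∫⁻ x in s y, f (x, y) ∂μ ∂ν := by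
  rw [← lintegral_indicator hDm, lintegral_prod_symm _ (hf.indicator hDm).aemeasurable,
    ← lintegral_indicator hT]
  refine lintegral_congr fun y => ?_
  by_cases hy : y ∈ T
  · have hfiber : (fun x => (x, y)) ⁻¹' D = s y := ext fun x => (hD x y).trans (and_iff_right hy)
    rw [indicator_of_mem hy, ← hfiber, ← lintegral_indicator (measurable_prodMk_right hDm)]
    rfl
  · simp only [indicator, hD, hy, false_and, if_false, lintegral_zero]

lemma setLIntegral_uIoc_abs_sub (a b : ℝ) :
    ∫⁻ x in uIoc a b, ENNReal.ofReal |x - a| = ENNReal.ofReal ((b - a) ^ 2 / 2) := by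
  have hint : IntegrableOn (fun x => |x - a|) (uIoc a b) :=
    (by fun_prop : Continuous fun x => |x - a|).integrableOn_uIoc
  have hval := integral_pow_abs_sub_uIoc (a := a) (b := b) 1
  simp only [pow_one, Nat.cast_one] at hval
  rw [← ofReal_integral_eq_lintegral_ofReal hint (.of_forall fun x => abs_nonneg _), hval]
  congr 1
  rw [← sq_abs (b - a)]
  norm_num

lemma setLIntegral_Ioc_ofReal_le (R : ℝ) :
    ∫⁻ r in Ioc 0 R, ENNReal.ofReal r ≤ ENNReal.ofReal (R ^ 2 / 2) := by
  calc ∫⁻ r in Ioc 0 R, ENNReal.ofReal r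
      ≤ ∫⁻ r in Ioc 0 R, ENNReal.ofReal |r - 0| := lintegral_mono fun r =>
        ENNReal.ofReal_le_ofReal ((le_abs_self r).trans_eq (by rw [sub_zero]))
    _ ≤ ∫⁻ r in uIoc 0 R, ENNReal.ofReal |r - 0| := lintegral_mono_set Ioc_subset_uIoc
    _ = ENNReal.ofReal (R ^ 2 / 2) := by rw [setLIntegral_uIoc_abs_sub, sub_zero]

lemma setLIntegral_uIoo_zero_abs_sub (d : ℝ) :
    ∫⁻ t in uIoo 0 d, ENNReal.ofReal |d - t| = ENNReal.ofReal (d ^ 2 / 2) := by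
  have hae : uIoo 0 d =ᵐ[volume] uIoc d 0 := uIoc_comm 0 d ▸ Ioo_ae_eq_Ioc
  simp only [setLIntegral_congr hae, abs_sub_comm d, setLIntegral_uIoc_abs_sub, zero_sub, neg_sq]

/-- The points whose polar angle lies in `[0, β]` and whose norm is at most `R` at that angle. As
`arg 0 = 0`, the origin is one of them only if `0 ≤ R 0`. -/
def polarRegion (R : ℝ → ℝ) (β : ℝ) : Set ℂ := {z | z.arg ∈ Icc 0 β ∧ ‖z‖ ≤ R z.arg}

lemma measurableSet_polarRegion {R : ℝ → ℝ} (hR : Measurable R) (β : ℝ) :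
    MeasurableSet (polarRegion R β) :=
  (Complex.measurable_arg measurableSet_Icc).inter
    (measurableSet_le measurable_norm (hR.comp Complex.measurable_arg))

lemma volume_polarRegion_le {R : ℝ → ℝ} (hR : Measurable R) (β : ℝ) :
    volume (polarRegion R β) ≤ ∫⁻ θ in Icc 0 β, ENNReal.ofReal (R θ ^ 2 / 2) := by
  set s : Set (ℝ × ℝ) := {p | p.2 ∈ Icc 0 β ∧ p.1 ∈ Ioc 0 (R p.2)}
  have hs : MeasurableSet s := (measurable_snd measurableSet_Icc).inter
    ((measurableSet_lt measurable_const measurable_fst).inter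
      (measurableSet_le measurable_fst (hR.comp measurable_snd)))
  have hmem (p : ℝ × ℝ) (hp : p ∈ polarCoord.target)
      (hz : Complex.polarCoord.symm p ∈ polarRegion R β) : p ∈ s := by
    have hinv := Complex.polarCoord.right_inv (Complex.polarCoord_target ▸ hp)
    rw [Complex.polarCoord_apply] at hinv
    have hnorm : ‖Complex.polarCoord.symm p‖ = p.1 := congrArg Prod.fst hinv
    have harg : (Complex.polarCoord.symm p).arg = p.2 := congrArg Prod.snd hinv
    rw [polarRegion, mem_ofPred_eq, hnorm, harg] at hz
    exact ⟨hz.1, hp.1, hz.2⟩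
  calc volume (polarRegion R β)
      = ∫⁻ p in polarCoord.target,
          ENNReal.ofReal p.1 • (polarRegion R β).indicator 1 (Complex.polarCoord.symm p) := by
        rw [Complex.lintegral_comp_polarCoord_symm,
          lintegral_indicator_one (measurableSet_polarRegion hR β)]
    _ ≤ ∫⁻ p in polarCoord.target, s.indicator (fun p => ENNReal.ofReal p.1) p := by
        refine setLIntegral_mono' polarCoord.open_target.measurableSet fun p hp => ?_
        by_cases hz : Complex.polarCoord.symm p ∈ polarRegion R β
        · rw [indicator_of_mem hz, indicator_of_mem (hmem p hp hz), Pi.one_apply, smul_eq_mul,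
            mul_one]
        · rw [indicator_of_notMem hz, smul_zero]
          exact zero_le
    _ ≤ ∫⁻ p in s, ENNReal.ofReal p.1 := by
        rw [← lintegral_indicator hs]
        exact setLIntegral_le_lintegral _ _
    _ = ∫⁻ θ in Icc 0 β, ∫⁻ r in Ioc 0 (R θ), ENNReal.ofReal r := by
        rw [Measure.volume_eq_prod]
        exact setLIntegral_fibers (fun _ _ => Iff.rfl) hs measurableSet_Icc
          (measurable_fst.ennreal_ofReal)
    _ ≤ ∫⁻ θ in Icc 0 β, ENNReal.ofReal (R θ ^ 2 / 2) :=
        lintegral_mono fun θ => setLIntegral_Ioc_ofReal_le (R θ)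

/-! ### The sweep of the supporting lines -/

/-- The point of signed position `p.1` on the line with unit normal of angle `p.2` and signed
distance `h p.2` from the origin, positions being measured from the foot of the perpendicular. -/
def tangentPoint (h : ℝ → ℝ) (p : ℝ × ℝ) : ℂ :=
  ⟨h p.2 * cos p.2 - p.1 * sin p.2, h p.2 * sin p.2 + p.1 * cos p.2⟩

section TangentPoint

variable {h : ℝ → ℝ} {p : ℝ × ℝ} {β : ℝ}

lemma radial_tangentPoint : radial (tangentPoint h p) p.2 = h p.2 := by
  simp only [radial, tangentPoint]
  linear_combination h p.2 * sin_sq_add_cos_sq p.2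

lemma tangential_tangentPoint : tangential (tangentPoint h p) p.2 = p.1 := by
  simp only [tangential, tangentPoint]
  linear_combination p.1 * sin_sq_add_cos_sq p.2

/-- The Fréchet derivative of `tangentPoint h` in real coordinates, at points where `h` is
differentiable. -/
def tangentPointDeriv (h : ℝ → ℝ) (p : ℝ × ℝ) : ℝ × ℝ →L[ℝ] ℝ × ℝ :=
  (Matrix.toLin (.finTwoProd ℝ) (.finTwoProd ℝ)
    !![-sin p.2, deriv h p.2 * cos p.2 - h p.2 * sin p.2 - p.1 * cos p.2;
      cos p.2, deriv h p.2 * sin p.2 + h p.2 * cos p.2 - p.1 * sin p.2]).toContinuousLinearMap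

lemma det_tangentPointDeriv : (tangentPointDeriv h p).det = p.1 - deriv h p.2 := by
  unfold tangentPointDeriv
  simp only [LinearMap.det_toContinuousLinearMap, LinearMap.det_toLin, Matrix.det_fin_two_of]
  linear_combination (p.1 - deriv h p.2) * sin_sq_add_cos_sq p.2

lemma hasFDerivAt_tangentPoint (hd : DifferentiableAt ℝ h p.2) :
    HasFDerivAt (Complex.measurableEquivRealProd ∘ tangentPoint h) (tangentPointDeriv h p) p := by
  unfold tangentPointDeriv
  rw [Matrix.toLin_finTwoProd_toContinuousLinearMap]
  have hfst := hasFDerivAt_fst (𝕜 := ℝ) (E := ℝ) (F := ℝ) (p := p)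
  have hsnd := hasFDerivAt_snd (𝕜 := ℝ) (E := ℝ) (F := ℝ) (p := p)
  have hh := hd.hasDerivAt.comp_hasFDerivAt p hsnd
  have hcos := (hasDerivAt_cos p.2).comp_hasFDerivAt p hsnd
  have hsin := (hasDerivAt_sin p.2).comp_hasFDerivAt p hsnd
  refine (((hh.mul hcos).sub (hfst.mul hsin)).prodMk
    ((hh.mul hsin).add (hfst.mul hcos))).congr_fderiv ?_
  ext <;> simp <;> ring

/-- The parameters of the points of the supporting lines strictly between the foot of the
perpendicular and the contact point, for the normal directions in `[0, β]`; `h` plays the role of a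
support function, so that its derivative is the position of the contact point. -/
def sweepDomain (h : ℝ → ℝ) (β : ℝ) : Set (ℝ × ℝ) :=
  {p | p.2 ∈ {θ | θ ∈ Icc 0 β ∧ DifferentiableAt ℝ h θ} ∧ p.1 ∈ uIoo 0 (deriv h p.2)}

lemma measurableSet_sweepDomain : MeasurableSet (sweepDomain h β) := by
  have hderiv : Measurable fun p : ℝ × ℝ => deriv h p.2 := (measurable_deriv h).comp measurable_snd
  exact (measurable_snd (measurableSet_Icc.inter (measurableSet_of_differentiableAt ℝ h))).inter
    ((measurableSet_lt (measurable_const.min hderiv) measurable_fst).inter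
      (measurableSet_lt measurable_fst (measurable_const.max hderiv)))

lemma lintegral_abs_det_tangentPointDeriv (hdiff : ∀ᵐ θ, DifferentiableAt ℝ h θ) :
    ∫⁻ p in sweepDomain h β, ENNReal.ofReal |(tangentPointDeriv h p).det| =
      ∫⁻ θ in Icc 0 β, ENNReal.ofReal (deriv h θ ^ 2 / 2) := by
  have hderiv : Measurable fun p : ℝ × ℝ => deriv h p.2 := (measurable_deriv h).comp measurable_snd
  calc ∫⁻ p in sweepDomain h β, ENNReal.ofReal |(tangentPointDeriv h p).det|
      = ∫⁻ p in sweepDomain h β, ENNReal.ofReal |deriv h p.2 - p.1| := by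
        simp only [det_tangentPointDeriv, abs_sub_comm]
    _ = ∫⁻ θ in {θ | θ ∈ Icc 0 β ∧ DifferentiableAt ℝ h θ},
          ∫⁻ t in uIoo 0 (deriv h θ), ENNReal.ofReal |deriv h θ - t| := by
        rw [Measure.volume_eq_prod]
        exact setLIntegral_fibers (fun _ _ => Iff.rfl) measurableSet_sweepDomain
          (measurableSet_Icc.inter (measurableSet_of_differentiableAt ℝ h))
          (hderiv.sub measurable_fst).abs.ennreal_ofReal
    _ = ∫⁻ θ in {θ | θ ∈ Icc 0 β ∧ DifferentiableAt ℝ h θ}, ENNReal.ofReal (deriv h θ ^ 2 / 2) :=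
        lintegral_congr fun θ => setLIntegral_uIoo_zero_abs_sub (deriv h θ)
    _ = ∫⁻ θ in Icc 0 β, ENNReal.ofReal (deriv h θ ^ 2 / 2) :=
        setLIntegral_congr (inter_ae_eq_left_of_ae_eq_univ (Filter.eventuallyEq_univ.2 hdiff))

lemma volume_tangentPoint_image (hdiff : ∀ᵐ θ, DifferentiableAt ℝ h θ)
    (hinj : InjOn (tangentPoint h) (sweepDomain h β)) :
    volume (tangentPoint h '' sweepDomain h β) =
      ∫⁻ θ in Icc 0 β, ENNReal.ofReal (deriv h θ ^ 2 / 2) := by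
  rw [← lintegral_abs_det_tangentPointDeriv hdiff,
    lintegral_abs_det_fderiv_eq_addHaar_image volume measurableSet_sweepDomain
      (fun p hp => (hasFDerivAt_tangentPoint hp.1.2).hasFDerivWithinAt)
      (Complex.measurableEquivRealProd.injective.comp_injOn hinj),
    image_comp, ← Complex.volume_preserving_equiv_real_prod.measure_preimage_equiv,
    Complex.measurableEquivRealProd.injective.preimage_image]

end TangentPoint

/-! ### The swept region -/

lemma mul_sub_neg_of_mem_uIoo {t d : ℝ} (ht : t ∈ uIoo 0 d) : t * (t - d) < 0 := by
  rcases le_total 0 d with hd | hd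
  · rw [uIoo_of_le hd] at ht
    exact mul_neg_of_pos_of_neg ht.1 (sub_neg.2 ht.2)
  · rw [uIoo_of_ge hd] at ht
    exact mul_neg_of_neg_of_pos ht.2 (sub_pos.2 ht.1)

-- A plane vector with components `x, t` inside the unit disk makes an angle at most `γ` with the
-- first axis as soon as `cos γ ≤ x`.
lemma abs_mul_cos_le_mul_sin {x t γ : ℝ} (hγ : γ ∈ Icc 0 (π / 2)) (hx : cos γ ≤ x)
    (hunit : x ^ 2 + t ^ 2 ≤ 1) : |t| * cos γ ≤ x * sin γ := by
  have hcos : 0 ≤ cos γ := cos_nonneg_of_mem_Icc ⟨by linarith [hγ.1, pi_pos], hγ.2⟩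
  have hsin : 0 ≤ sin γ := sin_nonneg_of_mem_Icc ⟨hγ.1, by linarith [hγ.2, pi_pos]⟩
  have ht : |t| ≤ sin γ := abs_le_of_sq_le_sq (by nlinarith [sin_sq_add_cos_sq γ]) hsin
  calc |t| * cos γ ≤ sin γ * x := by gcongr
    _ = x * sin γ := mul_comm _ _

lemma arg_mem_Icc {z : ℂ} {β : ℝ} (hβ : β ∈ Icc 0 (π / 2)) (hre : 0 ≤ z.re) (him : 0 ≤ z.im)
    (htan : tangential z β ≤ 0) : z.arg ∈ Icc 0 β := by
  refine ⟨Complex.arg_nonneg_iff.2 him, not_lt.1 fun hlt => htan.not_gt ?_⟩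
  have hz : z ≠ 0 := fun hz => by
    rw [hz, Complex.arg_zero] at hlt
    exact hlt.not_ge hβ.1
  have harg : z.arg ≤ π / 2 := Complex.arg_le_pi_div_two_iff.2 (.inl hre)
  rw [tangential_eq_norm_mul_sin]
  exact mul_pos (norm_pos_iff.2 hz)
    (sin_pos_of_pos_of_lt_pi (sub_pos.2 hlt) (by linarith [hβ.1, pi_pos]))

section Sweep

variable {K : Set ℂ} {β : ℝ} {p : ℝ × ℝ}

lemma radial_tangentPoint_lt (hK : IsCompact K) (hne : K.Nonempty)
    (hp : p ∈ sweepDomain (supportFn K) β) {ψ : ℝ} (hψ : 0 < p.1 * sin (ψ - p.2)) :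
    radial (tangentPoint (supportFn K) p) ψ < supportFn K ψ := by
  refine radial_lt_supportFn hK hne hp.1.2 radial_tangentPoint ?_
  rw [tangential_tangentPoint]
  have := mul_neg_of_neg_of_pos (mul_sub_neg_of_mem_uIoo hp.2) hψ
  by_contra! hnonneg
  nlinarith [mul_nonneg (sq_nonneg p.1) hnonneg]

lemma tangentPoint_notMem (hK : IsCompact K) (hp : p ∈ sweepDomain (supportFn K) β) :
    tangentPoint (supportFn K) p ∉ K := fun hmem => by
  have hcontact := tangential_eq_deriv_supportFn hK hmem hp.1.2 radial_tangentPoint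
  have := mul_sub_neg_of_mem_uIoo hp.2
  rw [← hcontact, tangential_tangentPoint, sub_self, mul_zero] at this
  exact this.false

-- A common point of two segments lies on the inner side of one of them, unless it is reached
-- backwards on the first and forwards on the second; but tangential components decrease.
lemma not_lt_of_tangentPoint_eq (hK : IsCompact K) (hne : K.Nonempty) (hβ : β ≤ π / 2)
    (hpos : ∀ θ ∈ Icc 0 β, 0 < supportFn K θ) {q : ℝ × ℝ}
    (hp : p ∈ sweepDomain (supportFn K) β) (hq : q ∈ sweepDomain (supportFn K) β)
    (heq : tangentPoint (supportFn K) p = tangentPoint (supportFn K) q) : ¬ p.2 < q.2 := by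
  intro hlt
  have hgap : q.2 - p.2 ≤ π / 2 := by linarith [hp.1.1.1, hq.1.1.2]
  have hsin : 0 < sin (q.2 - p.2) := sin_pos_of_pos_of_lt_pi (sub_pos.2 hlt) (by linarith [pi_pos])
  have hcos : 0 ≤ cos (q.2 - p.2) := cos_nonneg_of_mem_Icc ⟨by linarith [pi_pos], hgap⟩
  have hp1 : p.1 ≤ 0 := not_lt.1 fun hp1 => by
    have := radial_tangentPoint_lt hK hne hp (mul_pos hp1 hsin)
    rw [heq, radial_tangentPoint] at this
    exact this.false
  have hq1 : 0 ≤ q.1 := not_lt.1 fun hq1 => by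
    have := radial_tangentPoint_lt hK hne hq (ψ := p.2)
      (by rw [← neg_sub, sin_neg]; exact mul_pos_of_neg_of_neg hq1 (neg_neg_of_pos hsin))
    rw [← heq, radial_tangentPoint] at this
    exact this.false
  have htan := tangential_eq_sub (tangentPoint (supportFn K) p) p.2 q.2
  rw [tangential_tangentPoint, radial_tangentPoint, heq, tangential_tangentPoint] at htan
  linarith [mul_pos (hpos _ hp.1.1) hsin, mul_nonpos_of_nonpos_of_nonneg hp1 hcos]

lemma injOn_tangentPoint (hK : IsCompact K) (hne : K.Nonempty) (hβ : β ≤ π / 2)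
    (hpos : ∀ θ ∈ Icc 0 β, 0 < supportFn K θ) :
    InjOn (tangentPoint (supportFn K)) (sweepDomain (supportFn K) β) := fun p hp q hq heq => by
  have hangle : p.2 = q.2 := le_antisymm
    (not_lt.1 (not_lt_of_tangentPoint_eq hK hne hβ hpos hq hp heq.symm))
    (not_lt.1 (not_lt_of_tangentPoint_eq hK hne hβ hpos hp hq heq))
  refine Prod.ext ?_ hangle
  rw [← tangential_tangentPoint (h := supportFn K) (p := p), heq, hangle, tangential_tangentPoint]

lemma arg_tangentPoint_mem_Icc (hK : IsCompact K) (hball : ∀ z ∈ K, ‖z‖ ≤ 1) (h1 : 1 ∈ K)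
    (hβK : Complex.exp (β * Complex.I) ∈ K) (hβ : β ≤ π / 2)
    (hp : p ∈ sweepDomain (supportFn K) β) :
    (tangentPoint (supportFn K) p).arg ∈ Icc 0 β := by
  obtain ⟨⟨⟨hθ0, hθβ⟩, hd⟩, ht⟩ := hp
  set θ := p.2
  set x := supportFn K θ
  have hunit : x ^ 2 + p.1 ^ 2 ≤ 1 := by
    have := supportFn_sq_add_deriv_sq_le (R := 1) hK ⟨1, h1⟩ hball hd
    rw [NNReal.coe_one, one_pow] at this
    nlinarith [mul_sub_neg_of_mem_uIoo ht, sq_nonneg (p.1 - deriv (supportFn K) θ)]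
  have him := abs_mul_cos_le_mul_sin ⟨hθ0, hθβ.trans hβ⟩ (cos_le_supportFn hK h1 θ) hunit
  have htan := abs_mul_cos_le_mul_sin ⟨sub_nonneg.2 hθβ, by linarith⟩
    (cos_sub_le_supportFn hK hβK θ) hunit
  have hre := abs_mul_cos_le_mul_sin (γ := π / 2 - θ) ⟨by linarith, by linarith⟩
    ((cos_le_cos_of_nonneg_of_le_pi (by linarith) (by linarith [pi_pos]) (by linarith)).trans
      (cos_sub_le_supportFn hK hβK θ)) hunit
  rw [cos_pi_div_two_sub, sin_pi_div_two_sub] at hre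
  refine arg_mem_Icc ⟨hθ0.trans hθβ, hβ⟩ ?_ ?_ ?_
  · have := mul_le_mul_of_nonneg_right (le_abs_self p.1)
      (sin_nonneg_of_nonneg_of_le_pi hθ0 (by linarith [pi_pos]))
    simp only [tangentPoint]
    linarith
  · have := mul_le_mul_of_nonneg_right (neg_abs_le p.1)
      (cos_nonneg_of_mem_Icc ⟨by linarith [pi_pos], hθβ.trans hβ⟩)
    simp only [tangentPoint]
    linarith
  · have := mul_le_mul_of_nonneg_right (le_abs_self p.1)
      (cos_nonneg_of_mem_Icc (x := β - θ) ⟨by linarith [pi_pos], by linarith⟩)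
    rw [tangential_eq_sub _ θ, tangential_tangentPoint, radial_tangentPoint]
    linarith

lemma tangentPoint_mem_polarRegion (hK : IsCompact K) (hball : ∀ z ∈ K, ‖z‖ ≤ 1) (h1 : 1 ∈ K)
    (hβK : Complex.exp (β * Complex.I) ∈ K) (hβ : β ≤ π / 2)
    (hp : p ∈ sweepDomain (supportFn K) β) :
    tangentPoint (supportFn K) p ∈ polarRegion (supportFn K) β := by
  refine ⟨arg_tangentPoint_mem_Icc hK hball h1 hβK hβ hp, ?_⟩
  set z := tangentPoint (supportFn K) p
  have ht : p.1 ≠ 0 := left_ne_zero_of_mul (mul_sub_neg_of_mem_uIoo hp.2).ne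
  have htan : p.1 = ‖z‖ * sin (z.arg - p.2) :=
    tangential_tangentPoint.symm.trans (tangential_eq_norm_mul_sin z p.2)
  have hside : 0 < p.1 * sin (z.arg - p.2) := by
    refine pos_of_mul_pos_right (a := ‖z‖) ?_ (norm_nonneg z)
    rw [mul_left_comm, ← htan]
    exact mul_self_pos.2 ht
  exact radial_arg z ▸ (radial_tangentPoint_lt hK ⟨1, h1⟩ hp hside).le

end Sweep

/-! ### The sector inequality in the complex plane -/

lemma setLIntegral_Icc_ofReal {f : ℝ → ℝ} {a b : ℝ} (hab : a ≤ b)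
    (hf : IntervalIntegrable f volume a b) (hnonneg : 0 ≤ f) :
    ∫⁻ θ in Icc a b, ENNReal.ofReal (f θ) = ENNReal.ofReal (∫ θ in a..b, f θ) := by
  rw [intervalIntegral.integral_of_le hab, ← integral_Icc_eq_integral_Ioc,
    ofReal_integral_eq_lintegral_ofReal ((intervalIntegrable_iff_integrableOn_Icc_of_le hab).1 hf)
      (.of_forall hnonneg)]

lemma setLIntegral_deriv_sq {h : ℝ → ℝ} {C : NNReal} {a b : ℝ} (hh : LipschitzWith C h)
    (hab : a ≤ b) :
    ∫⁻ θ in Icc a b, ENNReal.ofReal (deriv h θ ^ 2 / 2) =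
      ENNReal.ofReal ((∫ θ in a..b, deriv h θ ^ 2) / 2) := by
  rw [setLIntegral_Icc_ofReal hab ((intervalIntegrable_deriv_sq hh a b).div_const 2)
    fun θ => by positivity, intervalIntegral.integral_div]

lemma setLIntegral_sq_add_setLIntegral_inv_sq {h : ℝ → ℝ} {β : ℝ} (hm : Measurable h)
    (hne : ∀ θ ∈ Icc 0 β, h θ ≠ 0) :
    (∫⁻ θ in Icc 0 β, ENNReal.ofReal (h θ ^ 2 / 2)) +
        ∫⁻ θ in Icc 0 β, ENNReal.ofReal ((h θ)⁻¹ ^ 2 / 2) =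
      ENNReal.ofReal β + ∫⁻ θ in Icc 0 β, ENNReal.ofReal (((h θ)⁻¹ - h θ) ^ 2 / 2) := by
  have hβ : ENNReal.ofReal β = ∫⁻ _ in Icc 0 β, ENNReal.ofReal 1 := by
    rw [setLIntegral_const, Real.volume_Icc, sub_zero, ENNReal.ofReal_one, one_mul]
  rw [hβ, ← lintegral_add_left (by fun_prop), ← lintegral_add_left (by fun_prop)]
  refine setLIntegral_congr_fun measurableSet_Icc fun θ hθ => ?_
  have hθ := hne θ hθ
  rw [← ENNReal.ofReal_add (by positivity) (by positivity),
    ← ENNReal.ofReal_add zero_le_one (by positivity)]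
  congr 1
  field_simp
  ring

section Sector

variable {K : Set ℂ} {β : ℝ}

lemma supportFn_pos (hK : IsCompact K) (h1 : 1 ∈ K) (hβK : Complex.exp (β * Complex.I) ∈ K)
    (hβ : β ≤ π / 2) {θ : ℝ} (hθ : θ ∈ Icc 0 β) : 0 < supportFn K θ :=
  lt_of_lt_of_le (by positivity) (sqrt_two_div_two_le_of_cos_le hθ hβ (cos_le_supportFn hK h1 θ)
    (cos_sub_le_supportFn hK hβK θ))

lemma volume_inter_add_setLIntegral_deriv_sq_le (hK : IsCompact K) (hball : ∀ z ∈ K, ‖z‖ ≤ 1)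
    (h1 : 1 ∈ K) (hβK : Complex.exp (β * Complex.I) ∈ K) (hβ : β ≤ π / 2) :
    volume (K ∩ {z | z.arg ∈ Icc 0 β}) +
        ∫⁻ θ in Icc 0 β, ENNReal.ofReal (deriv (supportFn K) θ ^ 2 / 2) ≤
      ∫⁻ θ in Icc 0 β, ENNReal.ofReal (supportFn K θ ^ 2 / 2) := by
  have hlip := lipschitzWith_supportFn (R := 1) hK ⟨1, h1⟩ hball
  have hinj := injOn_tangentPoint hK ⟨1, h1⟩ hβ fun θ => supportFn_pos hK h1 hβK hβ
  have hsub : K ∩ {z | z.arg ∈ Icc 0 β} ⊆ polarRegion (supportFn K) β := fun z hz =>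
    ⟨hz.2, radial_arg z ▸ radial_le_supportFn hK hz.1 z.arg⟩
  have hswept : tangentPoint (supportFn K) '' sweepDomain (supportFn K) β ⊆
      polarRegion (supportFn K) β :=
    image_subset_iff.2 fun p => tangentPoint_mem_polarRegion hK hball h1 hβK hβ
  have hdisj : Disjoint (tangentPoint (supportFn K) '' sweepDomain (supportFn K) β)
      (K ∩ {z | z.arg ∈ Icc 0 β}) := by
    rw [disjoint_left]
    rintro _ ⟨p, hp, rfl⟩ hmem
    exact tangentPoint_notMem hK hp hmem.1
  rw [← volume_tangentPoint_image hlip.ae_differentiableAt_real hinj, add_comm,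
    ← measure_union hdisj (hK.measurableSet.inter (Complex.measurable_arg measurableSet_Icc))]
  exact (measure_mono (union_subset hswept hsub)).trans
    (volume_polarRegion_le hlip.continuous.measurable β)

lemma volume_inter_le_setLIntegral_inv_sq (hK : IsCompact K) (hne : K.Nonempty)
    (hpos : ∀ θ ∈ Icc 0 β, 0 < supportFn K θ) {D : Set ℂ} (hD : ∀ z ∈ D, ∀ x ∈ K, ⟪x, z⟫ ≤ 1) :
    volume (D ∩ {z | z.arg ∈ Icc 0 β}) ≤
      ∫⁻ θ in Icc 0 β, ENNReal.ofReal ((supportFn K θ)⁻¹ ^ 2 / 2) := by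
  have hsub : D ∩ {z | z.arg ∈ Icc 0 β} ⊆ polarRegion (fun θ => (supportFn K θ)⁻¹) β := by
    rintro z ⟨hzD, hz⟩
    obtain ⟨x, hx, hcontact⟩ := exists_radial_eq_supportFn hK hne z.arg
    refine ⟨hz, (le_inv_mul_iff₀ (hpos _ hz)).2 ?_ |>.trans_eq (mul_one _)⟩
    rw [← hcontact, mul_comm, ← inner_eq_norm_mul_radial]
    exact hD z hzD x hx
  obtain ⟨R, hR⟩ := hK.isBounded.exists_norm_le
  have hlip := lipschitzWith_supportFn (R := R.toNNReal) hK hne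
    fun z hz => (hR z hz).trans R.le_coe_toNNReal
  exact (measure_mono hsub).trans (volume_polarRegion_le hlip.continuous.measurable.inv β)

lemma setLIntegral_inv_sub_supportFn_sq_le (hK : IsCompact K) (hball : ∀ z ∈ K, ‖z‖ ≤ 1)
    (h1 : 1 ∈ K) (hβK : Complex.exp (β * Complex.I) ∈ K) (hβ : β ∈ Icc 0 (π / 2)) :
    ∫⁻ θ in Icc 0 β, ENNReal.ofReal (((supportFn K θ)⁻¹ - supportFn K θ) ^ 2 / 2) ≤
      ∫⁻ θ in Icc 0 β, ENNReal.ofReal (deriv (supportFn K) θ ^ 2 / 2) := by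
  have hlip := lipschitzWith_supportFn (R := 1) hK ⟨1, h1⟩ hball
  have hpos : ∀ θ ∈ uIcc 0 β, 0 < supportFn K θ := fun θ hθ =>
    supportFn_pos hK h1 hβK hβ.2 (by rwa [uIcc_of_le hβ.1] at hθ)
  have henergy := integral_inv_sub_self_sq_le_integral_deriv_sq hlip hβ.1 hβ.2
    (fun θ _ => supportFn_le (R := 1) hK ⟨1, h1⟩ hball θ) (fun θ _ => cos_le_supportFn hK h1 θ)
    (fun θ _ => cos_sub_le_supportFn hK hβK θ) (by
      filter_upwards [hlip.ae_differentiableAt_real] with θ hd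
      simpa using supportFn_sq_add_deriv_sq_le (R := 1) hK ⟨1, h1⟩ hball hd)
  rw [setLIntegral_Icc_ofReal hβ.1
      ((intervalIntegrable_inv_sub_self_sq hlip.continuous hpos).div_const 2)
      fun θ => by positivity,
    setLIntegral_deriv_sq hlip hβ.1, intervalIntegral.integral_div]
  gcongr

theorem volume_inter_add_volume_inter_le (hK : IsCompact K) (hball : ∀ z ∈ K, ‖z‖ ≤ 1)
    (h1 : 1 ∈ K) (hβK : Complex.exp (β * Complex.I) ∈ K) (hβ : β ∈ Icc 0 (π / 2)) {D : Set ℂ}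
    (hD : ∀ z ∈ D, ∀ x ∈ K, ⟪x, z⟫ ≤ 1) :
    volume (K ∩ {z | z.arg ∈ Icc 0 β}) + volume (D ∩ {z | z.arg ∈ Icc 0 β}) ≤
      ENNReal.ofReal β := by
  have hne : K.Nonempty := ⟨1, h1⟩
  have hlip := lipschitzWith_supportFn (R := 1) hK hne hball
  have hpos : ∀ θ ∈ Icc 0 β, 0 < supportFn K θ := fun θ => supportFn_pos hK h1 hβK hβ.2
  set h := supportFn K
  set I := ∫⁻ θ in Icc 0 β, ENNReal.ofReal (deriv h θ ^ 2 / 2)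
  have hfin : I ≠ ∞ := (setLIntegral_deriv_sq hlip hβ.1).trans_ne ENNReal.ofReal_ne_top
  refine (ENNReal.add_le_add_iff_right hfin).1 ?_
  calc volume (K ∩ {z | z.arg ∈ Icc 0 β}) + volume (D ∩ {z | z.arg ∈ Icc 0 β}) + I
      = volume (K ∩ {z | z.arg ∈ Icc 0 β}) + I + volume (D ∩ {z | z.arg ∈ Icc 0 β}) :=
        add_right_comm _ _ _
    _ ≤ (∫⁻ θ in Icc 0 β, ENNReal.ofReal (h θ ^ 2 / 2)) +
          ∫⁻ θ in Icc 0 β, ENNReal.ofReal ((h θ)⁻¹ ^ 2 / 2) :=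
        add_le_add (volume_inter_add_setLIntegral_deriv_sq_le hK hball h1 hβK hβ.2)
          (volume_inter_le_setLIntegral_inv_sq hK hne hpos hD)
    _ = ENNReal.ofReal β + ∫⁻ θ in Icc 0 β, ENNReal.ofReal (((h θ)⁻¹ - h θ) ^ 2 / 2) :=
        setLIntegral_sq_add_setLIntegral_inv_sq hlip.continuous.measurable
          fun θ hθ => (hpos θ hθ).ne'
    _ ≤ ENNReal.ofReal β + I := by
        gcongr
        exact setLIntegral_inv_sub_supportFn_sq_le hK hball h1 hβK hβ

end Sector

/-! ### Transport to the complex plane -/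

/-- The convex cone spanned by `p` and `q`; for linearly independent vectors of the plane, the
sector between the rays through `p` and `q`. -/
def spannedSector {V : Type*} [AddCommGroup V] [Module ℝ V] (p q : V) : Set V :=
  {x | ∃ t s : ℝ, 0 ≤ t ∧ 0 ≤ s ∧ x = t • p + s • q}

lemma exists_linearIsometryEquiv_complex {V : Type*} [NormedAddCommGroup V]
    [InnerProductSpace ℝ V] (hV : Module.finrank ℝ V = 2) {p q : V} (hp : ‖p‖ = 1) (hq : ‖q‖ = 1) :
    ∃ Φ : V ≃ₗᵢ[ℝ] ℂ, Φ p = 1 ∧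
      Φ q = Complex.exp (InnerProductGeometry.angle p q * Complex.I) := by
  have : FiniteDimensional ℝ V := .of_finrank_pos (hV ▸ two_pos)
  obtain ⟨Φ, hΦp⟩ : ∃ Φ : V ≃ₗᵢ[ℝ] ℂ, Φ p = 1 := by
    let Ψ : V ≃ₗᵢ[ℝ] ℂ :=
      ((stdOrthonormalBasis ℝ V).reindex (finCongr hV)).equiv Complex.orthonormalBasisOneI (.refl _)
    obtain ⟨c, hc⟩ : ∃ c : Circle, (c : ℂ) = Ψ p :=
      ⟨⟨Ψ p, mem_sphere_zero_iff_norm.2 ((Ψ.norm_map p).trans hp)⟩, rfl⟩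
    refine ⟨Ψ.trans (rotation c⁻¹), ?_⟩
    rw [LinearIsometryEquiv.trans_apply, rotation_apply, ← hc, ← Circle.coe_mul, inv_mul_cancel,
      Circle.coe_one]
  have hΦq : ‖Φ q‖ = 1 := (Φ.norm_map q).trans hq
  have hangle : |(Φ q).arg| = InnerProductGeometry.angle p q := by
    rw [← Complex.angle_one_left (norm_ne_zero_iff.1 (hΦq ▸ one_ne_zero)), ← hΦp]
    exact Φ.toLinearIsometry.angle_map p q
  have hpolar := Complex.norm_mul_exp_arg_mul_I (Φ q)
  rw [hΦq, Complex.ofReal_one, one_mul] at hpolar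
  rcases le_total 0 (Φ q).arg with harg | harg
  · exact ⟨Φ, hΦp, by rw [← hangle, abs_of_nonneg harg, hpolar]⟩
  · refine ⟨Φ.trans Complex.conjLIE, by simp [hΦp], ?_⟩
    rw [← hangle, abs_of_nonpos harg, LinearIsometryEquiv.trans_apply, Complex.conjLIE_apply,
      ← hpolar, ← Complex.exp_conj]
    simp [hpolar]

lemma arg_mem_Icc_of_mem_spannedSector {z : ℂ} {β : ℝ} (hβ : β ∈ Icc 0 (π / 2))
    (hz : z ∈ spannedSector 1 (Complex.exp (β * Complex.I))) : z.arg ∈ Icc 0 β := by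
  obtain ⟨t, s, ht, hs, rfl⟩ := hz
  have hcos : 0 ≤ cos β := cos_nonneg_of_mem_Icc ⟨by linarith [hβ.1, pi_pos], hβ.2⟩
  have hsin : 0 ≤ sin β := sin_nonneg_of_mem_Icc ⟨hβ.1, by linarith [hβ.2, pi_pos]⟩
  have hre : (t • (1 : ℂ) + s • Complex.exp (β * Complex.I)).re = t + s * cos β := by
    simp [Complex.exp_ofReal_mul_I_re]
  have him : (t • (1 : ℂ) + s • Complex.exp (β * Complex.I)).im = s * sin β := by
    simp [Complex.exp_ofReal_mul_I_im]
  refine arg_mem_Icc hβ (hre ▸ by positivity) (him ▸ by positivity) ?_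
  rw [tangential, hre, him]
  linarith [mul_nonneg ht hsin]

lemma map_mem_spannedSector {V W : Type*} [AddCommGroup V] [Module ℝ V] [AddCommGroup W]
    [Module ℝ W] (f : V →ₗ[ℝ] W) {p q x : V} (hx : x ∈ spannedSector p q) :
    f x ∈ spannedSector (f p) (f q) := by
  obtain ⟨t, s, ht, hs, rfl⟩ := hx
  exact ⟨t, s, ht, hs, by rw [map_add, map_smul, map_smul]⟩

lemma polarBody_closure (K : Set E2) : polarBody (closure K) = polarBody K := by
  refine Subset.antisymm (fun y hy x hx => hy x (subset_closure hx)) fun y hy x hx => ?_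
  have hclosed : IsClosed {x : E2 | ⟪x, y⟫ ≤ 1} :=
    isClosed_le (by fun_prop) continuous_const
  exact closure_minimal hy hclosed hx

theorem sector_sum_bound_general {K : Set E2} (hKB : K ⊆ Metric.closedBall 0 1) {p q : E2}
    (hp : p ∈ closure K) (hq : q ∈ closure K) (hpn : ‖p‖ = 1) (hqn : ‖q‖ = 1)
    (hangle : InnerProductGeometry.angle p q ≤ π / 2) :
    volume (K ∩ spannedSector p q) + volume (polarBody K ∩ spannedSector p q) ≤
      ENNReal.ofReal (InnerProductGeometry.angle p q) := by
  set β := InnerProductGeometry.angle p q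
  have hβ : β ∈ Icc 0 (π / 2) := ⟨InnerProductGeometry.angle_nonneg p q, hangle⟩
  obtain ⟨Φ, hΦp, hΦq⟩ := exists_linearIsometryEquiv_complex finrank_euclideanSpace_fin hpn hqn
  have hball : closure K ⊆ Metric.closedBall 0 1 := closure_minimal hKB Metric.isClosed_closedBall
  have hcomp : IsCompact (closure K) :=
    (isCompact_closedBall 0 1).of_isClosed_subset isClosed_closure hball
  have hvolume {A B : Set E2} (hAB : A ⊆ B) : volume (A ∩ spannedSector p q) ≤
      volume (Φ '' B ∩ {z | z.arg ∈ Icc 0 β}) := by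
    refine (measure_mono fun x hx => ?_).trans (Φ.measurePreserving.measure_preimage_le _)
    refine ⟨mem_image_of_mem Φ (hAB hx.1), arg_mem_Icc_of_mem_spannedSector hβ ?_⟩
    rw [← hΦp, ← hΦq]
    exact map_mem_spannedSector Φ.toLinearMap hx.2
  calc volume (K ∩ spannedSector p q) + volume (polarBody K ∩ spannedSector p q)
      ≤ volume (Φ '' closure K ∩ {z | z.arg ∈ Icc 0 β}) +
          volume (Φ '' polarBody K ∩ {z | z.arg ∈ Icc 0 β}) :=
        add_le_add (hvolume subset_closure) (hvolume Subset.rfl)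
    _ ≤ ENNReal.ofReal β := by
        refine volume_inter_add_volume_inter_le (hcomp.image Φ.continuous) ?_
          ⟨p, hp, hΦp⟩ ⟨q, hq, hΦq⟩ hβ ?_
        · rintro _ ⟨x, hx, rfl⟩
          exact (Φ.norm_map x).trans_le (mem_closedBall_zero_iff.1 (hball hx))
        · rintro _ ⟨y, hy, rfl⟩ _ ⟨x, hx, rfl⟩
          rw [Φ.inner_map_map]
          exact (polarBody_closure K ▸ hy) x hx

/-- The sector inequality (*): for boundary points p, q of K on the unit circle
spanning an angle 2α ∈ (0, π/2], we have V(K∩S) + V(K*∩S) ≤ 2α. -/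
theorem sector_sum_bound
    (K : Set E2) (hKcomp : IsCompact K) (hKconv : Convex ℝ K)
    (h0 : (0 : E2) ∈ interior K) (hsym : K = -K)
    (hKB : K ⊆ Metric.closedBall 0 1)
    (p q : E2) (hp : p ∈ frontier K) (hq : q ∈ frontier K)
    (hpn : ‖p‖ = 1) (hqn : ‖q‖ = 1)
    (α : ℝ) (hangle : InnerProductGeometry.angle p q = 2 * α)
    (hα : 2 * α ∈ Set.Ioc 0 (π / 2))
    (S : Set E2)
    (hS : S = {x : E2 | ∃ t s : ℝ, 0 ≤ t ∧ 0 ≤ s ∧ x = t • p + s • q}) :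
    volume (K ∩ S) + volume (polarBody K ∩ S) ≤ ENNReal.ofReal (2 * α) := by
  subst hS
  rw [← hangle] at hα ⊢
  exact sector_sum_bound_general hKB (frontier_subset_closure hp) (frontier_subset_closure hq)
    hpn hqn hα.2
end
end

section
/- The function g(β) = (β/2)·(sin β + 1/sin β) + cos β is strictly increasing on the interval (0, π/2]; in particular, g(β) ≤ g(π/2) = π/2 for every β ∈ (0, π/2]. -/
open Real

/-!
Since `1 - sin² β = cos² β`, the derivative of `g` factors as
`cos² β * (sin β - β cos β) / (2 sin² β)`, and on `(0, π/2)` it is positive because `β < tan β`.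
-/

open Set

/-- The function `g` of the theorem, as a function on all of `ℝ`; where `sin β = 0`, the term
`1 / sin β` has the junk value `0`. -/
noncomputable def g (β : ℝ) : ℝ :=
  β / 2 * (sin β + 1 / sin β) + cos β

lemma mul_cos_lt_sin {x : ℝ} (hx : x ∈ Ioo 0 (π / 2)) : x * cos x < sin x := by
  have hcos : 0 < cos x := cos_pos_of_mem_Ioo ⟨by linarith [hx.1, pi_pos], hx.2⟩
  rw [← lt_div_iff₀ hcos, ← tan_eq_sin_div_cos]
  exact lt_tan hx.1 hx.2

lemma hasDerivAt_g {β : ℝ} (hsin : sin β ≠ 0) :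
    HasDerivAt g (cos β ^ 2 * (sin β - β * cos β) / (2 * sin β ^ 2)) β := by
  have hinv : HasDerivAt (fun x ↦ 1 / sin x) (-cos β / sin β ^ 2) β := by
    simpa only [one_div] using (hasDerivAt_sin β).fun_inv hsin
  have hg : HasDerivAt g (1 / 2 * (sin β + 1 / sin β) +
      β / 2 * (cos β + -cos β / sin β ^ 2) + -sin β) β :=
    (((hasDerivAt_id β).div_const 2).mul ((hasDerivAt_sin β).add hinv)).add (hasDerivAt_cos β)
  refine hg.congr_deriv ?_
  rw [cos_sq']
  field_simp
  ring

lemma continuousOn_g : ContinuousOn g (Ioo 0 π) := fun _ hβ ↦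
  (hasDerivAt_g (sin_pos_of_mem_Ioo hβ).ne').continuousAt.continuousWithinAt

lemma deriv_g_pos {β : ℝ} (hβ : β ∈ Ioo 0 (π / 2)) : 0 < deriv g β := by
  have hsin : 0 < sin β := sin_pos_of_pos_of_lt_pi hβ.1 (by linarith [hβ.2, pi_pos])
  have hcos : 0 < cos β := cos_pos_of_mem_Ioo ⟨by linarith [hβ.1, pi_pos], hβ.2⟩
  have hsub : 0 < sin β - β * cos β := sub_pos.2 (mul_cos_lt_sin hβ)
  rw [(hasDerivAt_g hsin.ne').deriv]
  positivity

lemma strictMonoOn_g : StrictMonoOn g (Ioc 0 (π / 2)) := by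
  have hsub : Ioc 0 (π / 2) ⊆ Ioo 0 π := Ioc_subset_Ioo_right (half_lt_self pi_pos)
  refine strictMonoOn_of_deriv_pos (convex_Ioc 0 (π / 2)) (continuousOn_g.mono hsub) fun β hβ ↦ ?_
  rw [interior_Ioc] at hβ
  exact deriv_g_pos hβ

lemma g_pi_div_two : g (π / 2) = π / 2 := by
  rw [g, sin_pi_div_two, cos_pi_div_two]
  ring

/-- The function g(β) = (β/2)(sin β + 1/sin β) + cos β is strictly increasing on (0, π/2],
g(π/2) = π/2, and hence g(β) ≤ π/2 there. -/
theorem g_strictMono_and_bound :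
    StrictMonoOn (fun β : ℝ => β / 2 * (Real.sin β + 1 / Real.sin β) + Real.cos β)
      (Set.Ioc 0 (π / 2)) ∧
    (π / 2 / 2 * (Real.sin (π / 2) + 1 / Real.sin (π / 2)) + Real.cos (π / 2) = π / 2) ∧
    ∀ β ∈ Set.Ioc 0 (π / 2),
      β / 2 * (Real.sin β + 1 / Real.sin β) + Real.cos β ≤ π / 2 := by
  refine ⟨strictMonoOn_g, g_pi_div_two, fun β hβ ↦ ?_⟩
  have hmax : π / 2 ∈ Ioc 0 (π / 2) := right_mem_Ioc.2 pi_div_two_pos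
  calc
    g β ≤ g (π / 2) := strictMonoOn_g.monotoneOn hβ hmax hβ.2
    _ = π / 2 := g_pi_div_two
end

section
/- Let K ⊂ ℝ² be an o-symmetric convex body such that B² is the John ellipse of K, i.e. B² ⊆ K and |det T| ≤ 1 for every invertible linear map T : ℝ² → ℝ² with T(B²) ⊆ K. Then V(K) + V(K*) ≤ 2π. -/
/-!
Let `h` be the support function of `K` as a function of the angle of the outer normal. Then
`2 V(K) ≤ ∫ (h² - h'²)` and `2 V(K*) ≤ ∫ 1 / h²` over a full period. Since `h ≥ 1` gives
`0 ≤ h - 1 / h ≤ 2 (h - 1)`, we have `h² + 1 / h² ≤ 2 + 4 (h - 1)²`, and it remains to absorb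
`4 ∫ (h - 1)²` into `∫ h'²`. This is Wirtinger's inequality on intervals of length at most `π / 2`
between zeros of `h - 1`, and the John condition provides enough zeros: every interval of length
`π / 2` contains a contact direction, as otherwise the disk could be stretched towards the middle
of the interval to an ellipse of larger area in `K`.

The support function is only Lipschitz. The bound on `V(K)` therefore comes from slightly enlarged
`C²` double averages `H` of `h`, for which the substitution `φ = θ + arctan (H' / H)` from the
normal angle `θ` to the polar angle `φ` turns the area integral into `½ ∫ H (H + H'')`, which
partial integration identifies with the required expression.
-/

open MeasureTheory Real
open scoped Pointwise RealInnerProductSpace ENNReal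

noncomputable section

section PolarCoordinates

open Set Function

/-- The unit vector of the plane at angle `θ` from the first coordinate axis. -/
def unitVec (θ : ℝ) : E2 := !₂[cos θ, sin θ]

lemma inner_unitVec (x : E2) (θ : ℝ) : ⟪x, unitVec θ⟫ = x 0 * cos θ + x 1 * sin θ := by
  simp [unitVec, PiLp.inner_apply, Fin.sum_univ_two, mul_comm]

lemma inner_unitVec_unitVec (a b : ℝ) : ⟪unitVec a, unitVec b⟫ = cos (a - b) := by
  rw [inner_unitVec, cos_sub]
  simp [unitVec]

lemma norm_unitVec (θ : ℝ) : ‖unitVec θ‖ = 1 := by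
  simp [unitVec, EuclideanSpace.norm_eq, Fin.sum_univ_two]

lemma unitVec_add_pi (θ : ℝ) : unitVec (θ + π) = -unitVec θ := by
  ext i; fin_cases i <;> simp [unitVec]

lemma unitVec_periodic : Periodic unitVec (2 * π) := by
  intro θ
  rw [two_mul, ← add_assoc, unitVec_add_pi, unitVec_add_pi, neg_neg]

lemma lipschitzWith_unitVec : LipschitzWith 1 unitVec := by
  refine LipschitzWith.of_dist_le_mul fun a b => ?_
  have hchord : ‖unitVec a - unitVec b‖ ^ 2 = 2 - 2 * cos (a - b) := by
    rw [norm_sub_sq_real, norm_unitVec, norm_unitVec, inner_unitVec_unitVec]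
    ring
  rw [dist_eq_norm, Real.dist_eq, NNReal.coe_one, one_mul]
  refine abs_le_of_sq_le_sq' ?_ (abs_nonneg _) |>.2
  rw [hchord, sq_abs]
  linarith [one_sub_sq_div_two_le_cos (x := a - b)]

lemma exists_eq_norm_smul_unitVec (v : E2) : ∃ θ : ℝ, v = ‖v‖ • unitVec θ := by
  refine ⟨Complex.arg ⟨v 0, v 1⟩, ?_⟩
  have hnorm : ‖v‖ = ‖(⟨v 0, v 1⟩ : ℂ)‖ := by
    simp [EuclideanSpace.norm_eq, Complex.norm_def, Complex.normSq_mk, Fin.sum_univ_two, sq]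
  rw [hnorm]
  ext i
  fin_cases i
  · simp [unitVec, Complex.norm_mul_cos_arg]
  · simp [unitVec, Complex.norm_mul_sin_arg]

/-- The density of the area of `S` with respect to the polar angle: `r` is integrated over the
part of the ray at angle `θ` that lies in `S`. -/
def areaDensity (S : Set E2) (θ : ℝ) : ℝ≥0∞ :=
  ∫⁻ r in Ioi (0 : ℝ), S.indicator (fun _ => ENNReal.ofReal r) (r • unitVec θ)

lemma areaDensity_periodic (S : Set E2) : Periodic (areaDensity S) (2 * π) := fun θ => by
  rw [areaDensity, areaDensity, unitVec_periodic θ]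

lemma areaDensity_le {S : Set E2} {θ R : ℝ} (hR : 0 ≤ R)
    (h : ∀ r, 0 < r → r • unitVec θ ∈ S → r ≤ R) :
    areaDensity S θ ≤ ENNReal.ofReal (R ^ 2 / 2) := by
  calc areaDensity S θ
      ≤ ∫⁻ r in Ioi (0 : ℝ), (Iic R).indicator (fun r => ENNReal.ofReal r) r := by
        refine setLIntegral_mono' measurableSet_Ioi fun r hr => ?_
        by_cases hrS : r • unitVec θ ∈ S
        · simp [hrS, h r hr hrS]
        · simp [hrS]
    _ = ∫⁻ r in Ioc 0 R, ENNReal.ofReal r := by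
        rw [setLIntegral_indicator measurableSet_Iic, inter_comm, Ioi_inter_Iic]
    _ = ENNReal.ofReal (∫ r in 0..R, r) := by
        rw [intervalIntegral.integral_of_le hR, ofReal_integral_eq_lintegral_ofReal]
        · exact continuous_id.integrableOn_Ioc
        · exact (ae_restrict_iff' measurableSet_Ioc).2 (.of_forall fun r hr => hr.1.le)
    _ = ENNReal.ofReal (R ^ 2 / 2) := by simp

lemma lintegral_Ioc_add_eq_of_periodic {g : ℝ → ℝ≥0∞} {T : ℝ} (hT : 0 < T) (hg : Periodic g T)
    (a b : ℝ) : ∫⁻ x in Ioc a (a + T), g x = ∫⁻ x in Ioc b (b + T), g x :=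
  (isAddFundamentalDomain_Ioc hT a).setLIntegral_eq (isAddFundamentalDomain_Ioc hT b) g
    hg.map_vadd_zmultiples

lemma volume_eq_lintegral_polar {S : Set E2} (hS : MeasurableSet S) :
    volume S = ∫⁻ p in polarCoord.target, S.indicator (fun _ => ENNReal.ofReal p.1)
      (p.1 • unitVec p.2) := by
  have hcoord : MeasurePreserving fun p : ℝ × ℝ => (!₂[p.1, p.2] : E2) :=
    (PiLp.volume_preserving_toLp (Fin 2)).comp (volume_preserving_finTwoArrow ℝ).symm
  have hpolar : ∀ p : ℝ × ℝ, (!₂[(polarCoord.symm p).1, (polarCoord.symm p).2] : E2)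
      = p.1 • unitVec p.2 := fun p => by
    ext i; fin_cases i <;> simp [unitVec]
  calc volume S
      = ∫⁻ p : ℝ × ℝ, S.indicator (fun _ => (1 : ℝ≥0∞)) (!₂[p.1, p.2] : E2) := by
        rw [hcoord.lintegral_comp (measurable_const.indicator hS), lintegral_indicator_const hS,
          one_mul]
    _ = ∫⁻ p in polarCoord.target, ENNReal.ofReal p.1 •
          S.indicator (fun _ => (1 : ℝ≥0∞)) (p.1 • unitVec p.2) := by
        rw [← lintegral_comp_polarCoord_symm]
        simp_rw [hpolar]
    _ = _ := by
        refine lintegral_congr fun p => ?_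
        by_cases hp : p.1 • unitVec p.2 ∈ S <;> simp [hp]

lemma volume_eq_lintegral_areaDensity {S : Set E2} (hS : MeasurableSet S) (a : ℝ) :
    volume S = ∫⁻ θ in Ioc a (a + 2 * π), areaDensity S θ := by
  have hmeas : Measurable fun p : ℝ × ℝ =>
      S.indicator (fun _ => ENNReal.ofReal p.1) (p.1 • unitVec p.2) := by
    have hpoint : Measurable fun p : ℝ × ℝ => p.1 • unitVec p.2 :=
      (continuous_fst.smul (lipschitzWith_unitVec.continuous.comp continuous_snd)).measurable
    exact Measurable.indicator (f := fun p : ℝ × ℝ => ENNReal.ofReal p.1)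
      (by fun_prop) (hpoint hS)
  rw [volume_eq_lintegral_polar hS, polarCoord_target, Measure.volume_eq_prod,
    ← Measure.prod_restrict, lintegral_prod_symm _ hmeas.aemeasurable,
    setLIntegral_congr Ioo_ae_eq_Ioc,
    lintegral_Ioc_add_eq_of_periodic two_pi_pos (areaDensity_periodic S) a (-π),
    show -π + 2 * π = π by ring]
  rfl

end PolarCoordinates

section SupportFunction

open Set Function
open scoped NNReal

variable {K : Set E2}

/-- The support function of `K` as a function of the angle of the outer normal. -/
def supportFun (K : Set E2) (θ : ℝ) : ℝ := sSup ((fun x : E2 => ⟪x, unitVec θ⟫) '' K)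

lemma inner_le_supportFun (hK : IsCompact K) {x : E2} (hx : x ∈ K) (θ : ℝ) :
    ⟪x, unitVec θ⟫ ≤ supportFun K θ :=
  le_csSup (hK.image (by fun_prop : Continuous fun x : E2 => ⟪x, unitVec θ⟫)).bddAbove
    (mem_image_of_mem _ hx)

lemma exists_inner_eq_supportFun (hK : IsCompact K) (hne : K.Nonempty) (θ : ℝ) :
    ∃ x ∈ K, ⟪x, unitVec θ⟫ = supportFun K θ :=
  (hK.image (by fun_prop : Continuous fun x : E2 => ⟪x, unitVec θ⟫)).sSup_mem (hne.image _)

lemma supportFun_nonneg (hK : IsCompact K) (h0 : 0 ∈ K) (θ : ℝ) : 0 ≤ supportFun K θ := by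
  simpa using inner_le_supportFun hK h0 θ

lemma one_le_supportFun (hK : IsCompact K) (hball : Metric.closedBall 0 1 ⊆ K) (θ : ℝ) :
    1 ≤ supportFun K θ := by
  simpa [norm_unitVec] using inner_le_supportFun hK (hball
    (mem_closedBall_zero_iff.2 (norm_unitVec θ).le)) θ

lemma supportFun_periodic_two_pi (K : Set E2) : Periodic (supportFun K) (2 * π) := fun θ => by
  rw [supportFun, supportFun, unitVec_periodic θ]

lemma supportFun_periodic_pi (hsym : K = -K) : Periodic (supportFun K) π := by
  intro θ
  have hneg : (fun x : E2 => ⟪x, unitVec (θ + π)⟫) = (fun x => ⟪x, unitVec θ⟫) ∘ Neg.neg := by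
    ext x
    simp [unitVec_add_pi]
  rw [supportFun, supportFun, hneg, image_comp, image_neg_eq_neg, ← hsym]

/-- Infinitesimally in `t` this is the convexity condition `0 ≤ h'' + h` for the support
function `h`. -/
lemma two_mul_cos_mul_supportFun_le (hK : IsCompact K) (hne : K.Nonempty) (θ t : ℝ) :
    2 * cos t * supportFun K θ ≤ supportFun K (θ + t) + supportFun K (θ - t) := by
  obtain ⟨x, hx, hxθ⟩ := exists_inner_eq_supportFun hK hne θ
  calc 2 * cos t * supportFun K θ = ⟪x, unitVec (θ + t)⟫ + ⟪x, unitVec (θ - t)⟫ := by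
        rw [← hxθ]
        simp only [inner_unitVec, cos_add, sin_add, cos_sub, sin_sub]
        ring
    _ ≤ _ := add_le_add (inner_le_supportFun hK hx _) (inner_le_supportFun hK hx _)

lemma lipschitzWith_supportFun (hK : IsCompact K) (hne : K.Nonempty) {C : ℝ≥0}
    (hC : ∀ x ∈ K, ‖x‖ ≤ C) : LipschitzWith C (supportFun K) := by
  refine LipschitzWith.of_le_add_mul C fun a b => ?_
  obtain ⟨x, hx, hxa⟩ := exists_inner_eq_supportFun hK hne a
  calc supportFun K a = ⟪x, unitVec b⟫ + ⟪x, unitVec a - unitVec b⟫ := by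
        rw [← hxa, inner_sub_right]
        ring
    _ ≤ supportFun K b + ‖x‖ * ‖unitVec a - unitVec b‖ :=
        add_le_add (inner_le_supportFun hK hx b) (real_inner_le_norm _ _)
    _ ≤ supportFun K b + C * dist a b := by
        gcongr
        · exact hC x hx
        · simpa [dist_eq_norm] using lipschitzWith_unitVec.dist_le_mul a b

lemma exists_lipschitzWith_supportFun (hK : IsCompact K) (hne : K.Nonempty) :
    ∃ C, LipschitzWith C (supportFun K) := by
  obtain ⟨R, hR⟩ := hK.isBounded.exists_norm_le
  exact ⟨R.toNNReal, lipschitzWith_supportFun hK hne fun x hx =>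
    (hR x hx).trans (le_coe_toNNReal R)⟩

lemma continuous_supportFun (hK : IsCompact K) (hne : K.Nonempty) : Continuous (supportFun K) :=
  (exists_lipschitzWith_supportFun hK hne).choose_spec.continuous

lemma mem_of_inner_le_supportFun (hK : IsCompact K) (hne : K.Nonempty) (hconv : Convex ℝ K)
    {x : E2} (hx : ∀ θ, ⟪x, unitVec θ⟫ ≤ supportFun K θ) : x ∈ K := by
  by_contra hxK
  obtain ⟨f, u, hfK, hfx⟩ := geometric_hahn_banach_closed_point hconv hK.isClosed hxK
  obtain ⟨v, rfl⟩ := (InnerProductSpace.toDual ℝ E2).surjective f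
  obtain ⟨θ, hv⟩ := exists_eq_norm_smul_unitVec v
  obtain ⟨y, hy, hyθ⟩ := exists_inner_eq_supportFun hK hne θ
  have hval : ∀ z, InnerProductSpace.toDual ℝ E2 v z = ‖v‖ * ⟪z, unitVec θ⟫ := fun z => by
    rw [InnerProductSpace.toDual_apply_apply, real_inner_comm, ← inner_smul_right, ← hv]
  have hxy : ‖v‖ * ⟪x, unitVec θ⟫ ≤ ‖v‖ * ⟪y, unitVec θ⟫ := by
    rw [hyθ]
    exact mul_le_mul_of_nonneg_left (hx θ) (norm_nonneg v)
  linarith [hval x, hval y, hfK y hy]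

end SupportFunction

section SteklovAverage

open Set Function Filter
open scoped NNReal Topology

/-- The Steklov average of `h`: its mean over the interval of length `s` centred at `θ`. Averaging
twice smooths a Lipschitz function to a `C²` one. -/
def steklov (s : ℝ) (h : ℝ → ℝ) (θ : ℝ) : ℝ := (∫ t in (-(s / 2))..(s / 2), h (θ + t)) / s

lemma steklov_periodic {h : ℝ → ℝ} {T : ℝ} (hT : Periodic h T) (s : ℝ) :
    Periodic (steklov s h) T := fun θ => by
  simp only [steklov, add_right_comm θ T, hT _]

lemma steklov_eq_integral_div (s : ℝ) (h : ℝ → ℝ) (θ : ℝ) :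
    steklov s h θ = (∫ t in (θ - s / 2)..(θ + s / 2), h t) / s := by
  rw [steklov, intervalIntegral.integral_comp_add_left, ← sub_eq_add_neg]

lemma hasDerivAt_steklov {h : ℝ → ℝ} (hc : Continuous h) (s θ : ℝ) :
    HasDerivAt (steklov s h) ((h (θ + s / 2) - h (θ - s / 2)) / s) θ := by
  have hprim : ∀ x, HasDerivAt (fun u => ∫ t in 0..u, h t) (h x) x := fun x =>
    (hc.integral_hasStrictDerivAt 0 x).hasDerivAt
  have heq : steklov s h =
      fun θ => ((∫ t in 0..(θ + s / 2), h t) - ∫ t in 0..(θ - s / 2), h t) / s := by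
    ext x
    rw [steklov_eq_integral_div, intervalIntegral.integral_interval_sub_left
      (hc.intervalIntegrable _ _) (hc.intervalIntegrable _ _)]
  rw [heq]
  exact (((hprim _).comp_add_const θ (s / 2)).sub ((hprim _).comp_sub_const θ (s / 2))).div_const s

lemma continuous_steklov {h : ℝ → ℝ} (hc : Continuous h) (s : ℝ) : Continuous (steklov s h) :=
  continuous_iff_continuousAt.2 fun θ => (hasDerivAt_steklov hc s θ).continuousAt

lemma hasDerivAt_deriv_steklov_steklov {h : ℝ → ℝ} (hc : Continuous h) (s θ : ℝ) :
    HasDerivAt (deriv (steklov s (steklov s h)))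
      ((h (θ + s) - 2 * h θ + h (θ - s)) / s ^ 2) θ := by
  have hderiv : deriv (steklov s (steklov s h)) =
      fun θ => (steklov s h (θ + s / 2) - steklov s h (θ - s / 2)) / s :=
    funext fun θ => (hasDerivAt_steklov (continuous_steklov hc s) s θ).deriv
  rw [hderiv]
  refine ((((hasDerivAt_steklov hc s _).comp_add_const θ (s / 2)).sub
    ((hasDerivAt_steklov hc s _).comp_sub_const θ (s / 2))).div_const s).congr_deriv ?_
  ring_nf

variable {h : ℝ → ℝ} {C : ℝ≥0}

lemma abs_steklov_sub_steklov_le {f g : ℝ → ℝ} {δ s a b : ℝ} (hf : Continuous f)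
    (hg : Continuous g) (hs : 0 < s) (hfg : ∀ t, |t| ≤ s / 2 → |f (a + t) - g (b + t)| ≤ δ) :
    |steklov s f a - steklov s g b| ≤ δ := by
  rw [steklov, steklov, ← sub_div, ← intervalIntegral.integral_sub
    (Continuous.intervalIntegrable (by fun_prop) _ _)
    (Continuous.intervalIntegrable (by fun_prop) _ _), abs_div, abs_of_pos hs, div_le_iff₀ hs]
  have hbound := intervalIntegral.norm_integral_le_of_norm_le_const
    (a := -(s / 2)) (b := s / 2) (C := δ) (f := fun t => f (a + t) - g (b + t)) fun t ht => by
      rw [uIoc_of_le (by linarith)] at ht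
      exact hfg t (abs_le.2 ⟨ht.1.le, ht.2⟩)
  rwa [sub_neg_eq_add, add_halves, abs_of_pos hs] at hbound

lemma steklov_const {s : ℝ} (hs : s ≠ 0) (c θ : ℝ) : steklov s (fun _ => c) θ = c := by
  simp [steklov, hs]

lemma lipschitzWith_steklov (hh : LipschitzWith C h) {s : ℝ} (hs : 0 < s) :
    LipschitzWith C (steklov s h) :=
  LipschitzWith.of_dist_le_mul fun a b =>
    abs_steklov_sub_steklov_le hh.continuous hh.continuous hs fun t _ => by
      simpa [Real.dist_eq] using hh.dist_le_mul (a + t) (b + t)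

lemma abs_steklov_sub_le (hh : LipschitzWith C h) {s : ℝ} (hs : 0 < s) (θ : ℝ) :
    |steklov s h θ - h θ| ≤ C * (s / 2) := by
  rw [← steklov_const hs.ne' (h θ) θ]
  refine abs_steklov_sub_steklov_le hh.continuous continuous_const hs fun t ht => ?_
  calc |h (θ + t) - h θ| ≤ C * |t| := by simpa [Real.dist_eq] using hh.dist_le_mul (θ + t) θ
    _ ≤ C * (s / 2) := by gcongr

lemma abs_steklov_steklov_sub_le (hh : LipschitzWith C h) {s : ℝ} (hs : 0 < s) (θ : ℝ) :
    |steklov s (steklov s h) θ - h θ| ≤ C * s := by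
  calc |steklov s (steklov s h) θ - h θ|
      ≤ |steklov s (steklov s h) θ - steklov s h θ| + |steklov s h θ - h θ| := abs_sub_le _ _ _
    _ ≤ C * (s / 2) + C * (s / 2) :=
        add_le_add (abs_steklov_sub_le (lipschitzWith_steklov hh hs) hs θ)
          (abs_steklov_sub_le hh hs θ)
    _ = C * s := by ring

lemma tendsto_steklov_steklov (hh : LipschitzWith C h) (θ : ℝ) :
    Tendsto (fun s => steklov s (steklov s h) θ) (𝓝[>] 0) (𝓝 (h θ)) := by
  have hbound : Tendsto (fun s : ℝ => C * s) (𝓝[>] 0) (𝓝 0) :=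
    ((continuous_const_mul (C : ℝ)).tendsto' 0 0 (mul_zero _)).mono_left nhdsWithin_le_nhds
  rw [tendsto_iff_dist_tendsto_zero]
  exact squeeze_zero' (.of_forall fun _ => dist_nonneg)
    (eventually_mem_nhdsWithin.mono fun s hs => abs_steklov_steklov_sub_le hh hs θ) hbound

/-- The derivative of the double average is `s⁻² ∫₀ˢ (h (θ + t) - h (θ - t)) dt`, to which
L'Hôpital's rule applies. -/
lemma tendsto_deriv_steklov_steklov {h' θ : ℝ} (hc : Continuous h) (hd : HasDerivAt h h' θ) :
    Tendsto (fun s => deriv (steklov s (steklov s h)) θ) (𝓝[>] 0) (𝓝 h') := by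
  set q : ℝ → ℝ := fun t => h (θ + t) - h (θ - t)
  have hq : Continuous q := by fun_prop
  have hderiv : ∀ s, deriv (steklov s (steklov s h)) θ = (∫ t in 0..s, q t) / s ^ 2 := by
    intro s
    rw [(hasDerivAt_steklov (continuous_steklov hc s) s θ).deriv, steklov_eq_integral_div,
      steklov_eq_integral_div,
      intervalIntegral.integral_sub (Continuous.intervalIntegrable (by fun_prop) _ _)
        (Continuous.intervalIntegrable (by fun_prop) _ _),
      intervalIntegral.integral_comp_add_left, intervalIntegral.integral_comp_sub_left]
    ring_nf
  have hslope : Tendsto (fun s => q s / (2 * s)) (𝓝[>] 0) (𝓝 h') := by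
    have hq' : HasDerivAt q (2 * h') 0 := by
      have hadd := (show HasDerivAt h h' (θ + 0) by simpa).comp_const_add θ 0
      have hsub := (show HasDerivAt h h' (θ - 0) by simpa).comp_const_sub θ 0
      exact (hadd.sub hsub).congr_deriv (by ring)
    have hlim := (hq'.tendsto_slope_zero_right).div_const 2
    simp only [zero_add, q, add_zero, sub_zero, sub_self, smul_eq_mul] at hlim
    rw [mul_div_cancel_left₀ _ two_ne_zero] at hlim
    refine hlim.congr fun s => ?_
    simp only [q]
    ring
  refine Tendsto.congr (fun s => (hderiv s).symm) ?_
  refine HasDerivAt.lhopital_zero_nhdsGT (g' := fun s => 2 * s)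
    (.of_forall fun s => (hq.integral_hasStrictDerivAt 0 s).hasDerivAt)
    (.of_forall fun s => by simpa using hasDerivAt_pow 2 s)
    (eventually_mem_nhdsWithin.mono fun s (hs : 0 < s) => by positivity) ?_ ?_ hslope
  · exact ((intervalIntegral.continuous_primitive (fun _ _ => hq.intervalIntegrable _ _)
      0).tendsto' 0 0 intervalIntegral.integral_same).mono_left nhdsWithin_le_nhds
  · exact ((continuous_pow 2).tendsto' 0 0 (zero_pow two_ne_zero)).mono_left nhdsWithin_le_nhds

end SteklovAverage


section Area

open Set Function Filter
open scoped NNReal Topology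

lemma lintegral_Ioc_ofReal_eq {f : ℝ → ℝ} (hf : Continuous f) (hf0 : ∀ x, 0 ≤ f x) {a b : ℝ}
    (hab : a ≤ b) : ∫⁻ x in Ioc a b, ENNReal.ofReal (f x) = ENNReal.ofReal (∫ x in a..b, f x) := by
  rw [intervalIntegral.integral_of_le hab,
    ofReal_integral_eq_lintegral_ofReal hf.integrableOn_Ioc (.of_forall hf0)]

lemma lintegral_Ioc_add_eq_lintegral_deriv_mul {φ φ' : ℝ → ℝ} {T : ℝ} {g : ℝ → ℝ≥0∞}
    (hT : 0 < T) (hφ : ∀ x, HasDerivAt φ (φ' x) x) (hφ' : ∀ x, 0 < φ' x)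
    (hφT : ∀ x, φ (x + T) = φ x + T) (hg : Periodic g T) (a b : ℝ) :
    ∫⁻ y in Ioc b (b + T), g y = ∫⁻ x in Ioc a (a + T), ENNReal.ofReal (φ' x) * g (φ x) := by
  have hmono : StrictMono φ := strictMono_of_hasDerivAt_pos hφ hφ'
  have himage : φ '' Ioc a (a + T) = Ioc (φ a) (φ a + T) := by
    rw [← hφT]
    refine Subset.antisymm ?_ (intermediate_value_Ioc (by linarith)
      fun x _ => (hφ x).continuousAt.continuousWithinAt)
    rintro _ ⟨x, hx, rfl⟩
    exact ⟨hmono hx.1, hmono.monotone hx.2⟩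
  rw [lintegral_Ioc_add_eq_of_periodic hT hg b (φ a), ← himage,
    lintegral_image_eq_lintegral_abs_deriv_mul measurableSet_Ioc
      (fun x _ => (hφ x).hasDerivWithinAt) hmono.injective.injOn]
  simp_rw [abs_of_pos (hφ' _)]

lemma periodic_deriv {f : ℝ → ℝ} {T : ℝ} (hf : Periodic f T) : Periodic (deriv f) T := fun x => by
  rw [← deriv_comp_add_const, hf.funext]

variable {K : Set E2} {H H' H'' : ℝ → ℝ}

/-- The polar angle of the boundary point `H θ • unitVec θ + H' θ • unitVec (θ + π / 2)` with outer
normal `unitVec θ` of a smooth convex body with support function `H` and `H' = deriv H`. -/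
def boundaryAngle (H H' : ℝ → ℝ) (θ : ℝ) : ℝ := θ + arctan (H' θ / H θ)

lemma hasDerivAt_boundaryAngle {θ : ℝ} (hH : HasDerivAt H (H' θ) θ)
    (hH' : HasDerivAt H' (H'' θ) θ) (hpos : 0 < H θ) :
    HasDerivAt (boundaryAngle H H') (H θ * (H θ + H'' θ) / (H θ ^ 2 + H' θ ^ 2)) θ := by
  refine ((hasDerivAt_id θ).add (hH'.div hH hpos.ne').arctan).congr_deriv ?_
  simp only [Pi.div_apply]
  field_simp
  ring

lemma areaDensity_boundaryAngle_le (hK : IsCompact K) {θ : ℝ} (hpos : 0 < H θ)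
    (hle : supportFun K θ ≤ H θ) :
    areaDensity K (boundaryAngle H H' θ) ≤ ENNReal.ofReal ((H θ ^ 2 + H' θ ^ 2) / 2) := by
  have hsq : 0 < H θ ^ 2 + H' θ ^ 2 := by positivity
  have hcos : cos (boundaryAngle H H' θ - θ) = H θ / √(H θ ^ 2 + H' θ ^ 2) := by
    rw [boundaryAngle, add_sub_cancel_left, cos_arctan,
      show 1 + (H' θ / H θ) ^ 2 = (H θ ^ 2 + H' θ ^ 2) / H θ ^ 2 by field_simp,
      sqrt_div hsq.le, sqrt_sq hpos.le, one_div_div]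
  rw [← sq_sqrt hsq.le]
  refine areaDensity_le (sqrt_nonneg _) fun r _ hrK => ?_
  have hr : r * (H θ / √(H θ ^ 2 + H' θ ^ 2)) ≤ H θ := by
    rw [← hcos, ← inner_unitVec_unitVec, ← real_inner_smul_left]
    exact (inner_le_supportFun hK hrK θ).trans hle
  rw [← mul_div_assoc, div_le_iff₀ (sqrt_pos.2 hsq), mul_comm (H θ)] at hr
  exact le_of_mul_le_mul_right hr hpos

lemma integral_mul_add_deriv_deriv_of_periodic {T : ℝ} (hH : ∀ θ, HasDerivAt H (H' θ) θ)
    (hH' : ∀ θ, HasDerivAt H' (H'' θ) θ) (hH'' : Continuous H'') (hper : Periodic H T) (a : ℝ) :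
    ∫ θ in a..(a + T), H θ * (H θ + H'' θ) = ∫ θ in a..(a + T), (H θ ^ 2 - H' θ ^ 2) := by
  have hcH : Continuous H := continuous_iff_continuousAt.2 fun θ => (hH θ).continuousAt
  have hcH' : Continuous H' := continuous_iff_continuousAt.2 fun θ => (hH' θ).continuousAt
  have hper' : Periodic H' T := (funext fun θ => (hH θ).deriv : deriv H = H') ▸ periodic_deriv hper
  have hparts : ∫ θ in a..(a + T), (H' θ * H' θ + H θ * H'' θ) = 0 := by
    rw [intervalIntegral.integral_deriv_mul_eq_sub (fun x _ => hH x) (fun x _ => hH' x)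
      (hcH'.intervalIntegrable _ _) (hH''.intervalIntegrable _ _), hper a, hper' a, sub_self]
  rw [← add_zero (∫ θ in a..(a + T), (H θ ^ 2 - H' θ ^ 2)), ← hparts,
    ← intervalIntegral.integral_add (Continuous.intervalIntegrable (by fun_prop) _ _)
      (Continuous.intervalIntegrable (by fun_prop) _ _)]
  congr 1 with θ
  ring

lemma volume_le_of_supportFun_le (hK : IsCompact K) (hH : ∀ θ, HasDerivAt H (H' θ) θ)
    (hH' : ∀ θ, HasDerivAt H' (H'' θ) θ) (hH'' : Continuous H'') (hper : Periodic H (2 * π))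
    (hpos : ∀ θ, 0 < H θ) (hcurv : ∀ θ, 0 < H θ + H'' θ) (hle : ∀ θ, supportFun K θ ≤ H θ)
    (a : ℝ) :
    volume K ≤ ENNReal.ofReal ((∫ θ in a..(a + 2 * π), (H θ ^ 2 - H' θ ^ 2)) / 2) := by
  have hcH : Continuous H := continuous_iff_continuousAt.2 fun θ => (hH θ).continuousAt
  have hper' : Periodic H' (2 * π) :=
    (funext fun θ => (hH θ).deriv : deriv H = H') ▸ periodic_deriv hper
  have hspeed : ∀ θ, 0 < H θ * (H θ + H'' θ) / (H θ ^ 2 + H' θ ^ 2) := fun θ => by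
    have := hpos θ
    have := hcurv θ
    positivity
  calc volume K
      = ∫⁻ φ in Ioc a (a + 2 * π), areaDensity K φ :=
        volume_eq_lintegral_areaDensity hK.isClosed.measurableSet a
    _ = ∫⁻ θ in Ioc a (a + 2 * π), ENNReal.ofReal (H θ * (H θ + H'' θ) / (H θ ^ 2 + H' θ ^ 2))
          * areaDensity K (boundaryAngle H H' θ) :=
        lintegral_Ioc_add_eq_lintegral_deriv_mul two_pi_pos
          (fun θ => hasDerivAt_boundaryAngle (hH θ) (hH' θ) (hpos θ)) hspeed
          (fun θ => by rw [boundaryAngle, boundaryAngle, hper, hper']; ring)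
          (areaDensity_periodic K) a a
    _ ≤ ∫⁻ θ in Ioc a (a + 2 * π), ENNReal.ofReal (H θ * (H θ + H'' θ) / 2) := by
        refine lintegral_mono fun θ => (mul_le_mul_right
          (areaDensity_boundaryAngle_le hK (hpos θ) (hle θ)) _).trans_eq ?_
        have := hpos θ
        rw [← ENNReal.ofReal_mul (hspeed θ).le]
        congr 1
        field_simp
    _ = ENNReal.ofReal ((∫ θ in a..(a + 2 * π), (H θ ^ 2 - H' θ ^ 2)) / 2) := by
        rw [lintegral_Ioc_ofReal_eq (by fun_prop)
            (fun θ => (div_pos (mul_pos (hpos θ) (hcurv θ)) two_pos).le)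
            (le_add_of_nonneg_right two_pi_pos.le),
          intervalIntegral.integral_div,
          integral_mul_add_deriv_deriv_of_periodic hH hH' hH'' hper]

/-- The condition `0 ≤ h'' + h` on a support function survives averaging up to an error `O(s)`,
which the linear correction absorbs. -/
lemma volume_le_integral_steklov_steklov (hK : IsCompact K) (h0 : 0 ∈ K) {C : ℝ≥0}
    (hC : LipschitzWith C (supportFun K)) {s : ℝ} (hs : 0 < s) (a : ℝ) :
    volume K ≤ ENNReal.ofReal ((∫ θ in a..(a + 2 * π),
      ((steklov s (steklov s (supportFun K)) θ + (C + 1) * s) ^ 2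
        - deriv (steklov s (steklov s (supportFun K))) θ ^ 2)) / 2) := by
  have hc := hC.continuous
  have hlower : ∀ θ, supportFun K θ + s ≤ steklov s (steklov s (supportFun K)) θ + (C + 1) * s :=
    fun θ => by linarith [(abs_le.1 (abs_steklov_steklov_sub_le hC hs θ)).1]
  have hcurv : ∀ θ, -supportFun K θ ≤
      (supportFun K (θ + s) - 2 * supportFun K θ + supportFun K (θ - s)) / s ^ 2 := fun θ => by
    rw [le_div_iff₀ (by positivity)]
    nlinarith [two_mul_cos_mul_supportFun_le hK ⟨0, h0⟩ θ s, supportFun_nonneg hK h0 θ,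
      one_sub_sq_div_two_le_cos (x := s)]
  refine volume_le_of_supportFun_le hK
    (fun θ => ((hasDerivAt_steklov (continuous_steklov hc s) s
      θ).differentiableAt.hasDerivAt).add_const _)
    (hasDerivAt_deriv_steklov_steklov hc s) (by fun_prop) ?_ ?_ ?_ ?_ a
  · exact fun θ => congrArg (· + _)
      (steklov_periodic (steklov_periodic (supportFun_periodic_two_pi K) s) s θ)
  · exact fun θ => by linarith [hlower θ, supportFun_nonneg hK h0 θ]
  · exact fun θ => by linarith [hlower θ, hcurv θ]
  · exact fun θ => by linarith [hlower θ]

lemma tendsto_integral_steklov_steklov {h : ℝ → ℝ} {C : ℝ≥0} (hh : LipschitzWith C h)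
    (c a b : ℝ) :
    Tendsto (fun s => ∫ θ in a..b, ((steklov s (steklov s h) θ + c * s) ^ 2
      - deriv (steklov s (steklov s h)) θ ^ 2)) (𝓝[>] 0)
      (𝓝 (∫ θ in a..b, (h θ ^ 2 - deriv h θ ^ 2))) := by
  have hc := hh.continuous
  have hshift : Tendsto (fun s : ℝ => c * s) (𝓝[>] 0) (𝓝 0) :=
    ((continuous_const_mul c).tendsto' 0 0 (mul_zero _)).mono_left nhdsWithin_le_nhds
  refine intervalIntegral.tendsto_integral_filter_of_dominated_convergence
    (fun θ => (|h θ| + (C + |c|)) ^ 2 + (C : ℝ) ^ 2) ?_ ?_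
    (Continuous.intervalIntegrable (by fun_prop) _ _) ?_
  · refine .of_forall fun s => Continuous.aestronglyMeasurable ?_
    have := continuous_steklov (continuous_steklov hc s) s
    have : Continuous (deriv (steklov s (steklov s h))) :=
      continuous_iff_continuousAt.2 fun θ => (hasDerivAt_deriv_steklov_steklov hc s θ).continuousAt
    fun_prop
  · filter_upwards [Ioo_mem_nhdsGT one_pos] with s ⟨hs0, hs1⟩
    refine .of_forall fun θ _ => ?_
    have hvalue : |steklov s (steklov s h) θ + c * s| ≤ |h θ| + (C + |c|) := by
      calc |steklov s (steklov s h) θ + c * s|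
          = |h θ + ((steklov s (steklov s h) θ - h θ) + c * s)| := by ring_nf
        _ ≤ |h θ| + (|steklov s (steklov s h) θ - h θ| + |c * s|) :=
          (abs_add_le _ _).trans (add_le_add_right (abs_add_le _ _) _)
        _ ≤ |h θ| + (C * s + |c| * s) := by
          gcongr
          · exact abs_steklov_steklov_sub_le hh hs0 θ
          · rw [abs_mul, abs_of_pos hs0]
        _ ≤ |h θ| + (C + |c|) := by
          gcongr <;> exact mul_le_of_le_one_right (by positivity) hs1.le
    have hslope : |deriv (steklov s (steklov s h)) θ| ≤ C :=
      norm_deriv_le_of_lipschitz (lipschitzWith_steklov (lipschitzWith_steklov hh hs0) hs0)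
    refine (norm_sub_le _ _).trans (add_le_add ?_ ?_) <;> rw [norm_pow] <;> gcongr <;> assumption
  · filter_upwards [hh.ae_differentiableAt_real] with θ hθ _
    simpa using (((tendsto_steklov_steklov hh θ).add hshift).pow 2).sub
      ((tendsto_deriv_steklov_steklov hc hθ.hasDerivAt).pow 2)

theorem volume_le_integral_supportFun (hK : IsCompact K) (h0 : 0 ∈ K) (a : ℝ) :
    volume K ≤ ENNReal.ofReal
      ((∫ θ in a..(a + 2 * π), (supportFun K θ ^ 2 - deriv (supportFun K) θ ^ 2)) / 2) := by
  obtain ⟨C, hC⟩ := exists_lipschitzWith_supportFun hK ⟨0, h0⟩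
  exact ge_of_tendsto (ENNReal.tendsto_ofReal
    ((tendsto_integral_steklov_steklov hC (C + 1) a (a + 2 * π)).div_const 2))
    (eventually_mem_nhdsWithin.mono fun s hs => volume_le_integral_steklov_steklov hK h0 hC hs a)

lemma isClosed_polarBody (K : Set E2) : IsClosed (polarBody K) := by
  simp only [polarBody, ofPred_forall]
  exact isClosed_biInter fun x _ => isClosed_le (by fun_prop) continuous_const

theorem volume_polarBody_le_integral_supportFun (hK : IsCompact K) (hne : K.Nonempty)
    (hpos : ∀ θ, 0 < supportFun K θ) (a : ℝ) :
    volume (polarBody K) ≤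
      ENNReal.ofReal ((∫ θ in a..(a + 2 * π), 1 / supportFun K θ ^ 2) / 2) := by
  have hcont : Continuous fun θ => 1 / supportFun K θ ^ 2 / 2 :=
    (continuous_const.div ((continuous_supportFun hK hne).pow 2)
      fun θ => (pow_pos (hpos θ) 2).ne').div_const 2
  rw [volume_eq_lintegral_areaDensity (isClosed_polarBody K).measurableSet a,
    ← intervalIntegral.integral_div, ← lintegral_Ioc_ofReal_eq hcont (fun θ => by positivity)
      (le_add_of_nonneg_right two_pi_pos.le)]
  refine lintegral_mono fun θ => ?_
  simp only [one_div, ← inv_pow]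
  refine areaDensity_le (inv_nonneg.2 (hpos θ).le) fun r _ hrK => ?_
  obtain ⟨x, hx, hxθ⟩ := exists_inner_eq_supportFun hK hne θ
  have hrx : r * supportFun K θ ≤ 1 := by
    rw [← hxθ, ← real_inner_smul_right]
    exact hrK x hx
  rwa [inv_eq_one_div, le_div_iff₀ (hpos θ)]

end Area

section Wirtinger

open Set Function Filter
open scoped NNReal Topology

/-- The function `c = -k tan (k (x - m))`, with `m` the midpoint of `[a, b]`, solves the Riccati
equation `c' = -k² - c²`, whence `f'² - k² f² - (c f²)' = (f' - c f)² ≥ 0`. -/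
lemma sq_mul_integral_sq_le_integral_deriv_sq_of_lt {f : ℝ → ℝ} {a b k : ℝ} (hab : a ≤ b)
    (hk : 0 ≤ k) (hkab : k * (b - a) < π) (hf : AbsolutelyContinuousOnInterval f a b)
    (hf' : IntervalIntegrable (fun x => deriv f x ^ 2) volume a b) (ha : f a = 0) (hb : f b = 0) :
    k ^ 2 * ∫ x in a..b, f x ^ 2 ≤ ∫ x in a..b, deriv f x ^ 2 := by
  set c : ℝ → ℝ := fun x => -k * tan (k * (x - (a + b) / 2)) with hc
  have hcos : ∀ x ∈ Icc a b, cos (k * (x - (a + b) / 2)) ≠ 0 := fun x hx =>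
    (cos_pos_of_mem_Ioo ⟨by nlinarith [hx.1], by nlinarith [hx.2]⟩).ne'
  have hriccati : ∀ x ∈ Icc a b, HasDerivAt c (-k ^ 2 - c x ^ 2) x := fun x hx => by
    refine ((hasDerivAt_tan (hcos x hx)).comp x
      (((hasDerivAt_id x).sub_const _).const_mul k) |>.const_mul (-k)).congr_deriv ?_
    rw [one_div, ← inv_one_add_tan_sq (hcos x hx), inv_inv]
    simp only [hc]
    ring
  have hcAC : AbsolutelyContinuousOnInterval c a b := by
    refine ContDiffOn.absolutelyContinuousOnInterval fun x hx => ContDiffAt.contDiffWithinAt ?_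
    rw [uIcc_of_le hab] at hx
    exact contDiffAt_const.mul (ContDiffAt.comp (f := fun x => k * (x - (a + b) / 2)) x
      (contDiffAt_tan.2 (hcos x hx)) (by fun_prop))
  have hfc : AbsolutelyContinuousOnInterval (f * f * c) a b := (hf.mul hf).mul hcAC
  have hboundary : ∫ x in a..b, deriv (f * f * c) x = 0 := by
    rw [hfc.integral_deriv_eq_sub]
    simp [ha, hb]
  have hfsq : IntervalIntegrable (fun x => k ^ 2 * f x ^ 2) volume a b :=
    (continuousOn_const.mul (hf.continuousOn.pow 2)).intervalIntegrable
  rw [← intervalIntegral.integral_const_mul, ← add_zero (∫ x in a..b, _), ← hboundary,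
    ← intervalIntegral.integral_add hfsq hfc.intervalIntegrable_deriv]
  refine intervalIntegral.integral_mono_ae_restrict hab
    (hfsq.add hfc.intervalIntegrable_deriv) hf' ?_
  rw [EventuallyLE, ae_restrict_iff' measurableSet_Icc]
  filter_upwards [hf.ae_differentiableAt] with x hfx hx
  have hd := (hfx (by rwa [uIcc_of_le hab])).hasDerivAt
  simp only [((hd.mul hd).mul (hriccati x hx)).deriv, Pi.mul_apply]
  linarith [sq_nonneg (deriv f x - c x * f x)]

theorem sq_mul_integral_sq_le_integral_deriv_sq {f : ℝ → ℝ} {a b k : ℝ} (hab : a ≤ b)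
    (hk : 0 ≤ k) (hkab : k * (b - a) ≤ π) (hf : AbsolutelyContinuousOnInterval f a b)
    (hf' : IntervalIntegrable (fun x => deriv f x ^ 2) volume a b) (ha : f a = 0) (hb : f b = 0) :
    k ^ 2 * ∫ x in a..b, f x ^ 2 ≤ ∫ x in a..b, deriv f x ^ 2 := by
  have hlim : Tendsto (fun t : ℝ => (t * k) ^ 2 * ∫ x in a..b, f x ^ 2) (𝓝[<] 1)
      (𝓝 (k ^ 2 * ∫ x in a..b, f x ^ 2)) :=
    (Continuous.tendsto' (by fun_prop) _ _ (by rw [one_mul])).mono_left nhdsWithin_le_nhds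
  refine le_of_tendsto hlim ?_
  filter_upwards [Ioo_mem_nhdsLT one_pos] with t ⟨ht0, ht1⟩
  refine sq_mul_integral_sq_le_integral_deriv_sq_of_lt hab (by positivity) ?_ hf hf' ha hb
  nlinarith [pi_pos]

lemma exists_mem_subdivision {Z : Set ℝ} (hZ : IsClosed Z) {L : ℝ}
    (hmeet : ∀ x, (Z ∩ Icc x (x + L)).Nonempty) (a : ℝ) :
    ∃ b ∈ Z, ∃ c ∈ Z, b ∈ Icc a (a + L) ∧ c ∈ Icc (a + L) (a + 2 * L) ∧ c - b ≤ L := by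
  obtain ⟨b, ⟨hbZ, hb⟩, hbmax⟩ := (isCompact_Icc.inter_left hZ).exists_isGreatest (hmeet a)
  obtain ⟨c, ⟨hcZ, hc⟩, hcmin⟩ := (isCompact_Icc.inter_left hZ).exists_isLeast (hmeet (a + L))
  rw [add_assoc, ← two_mul] at hc
  refine ⟨b, hbZ, c, hcZ, hb, hc, ?_⟩
  by_contra! hgap
  obtain ⟨z, hzZ, hz⟩ := hmeet ((b + c - L) / 2)
  rcases le_total z (a + L) with hzL | hzL
  · linarith [hbmax ⟨hzZ, by linarith [hb.1, hz.1], hzL⟩, hz.1]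
  · linarith [hcmin ⟨hzZ, hzL, by linarith [hc.2, hz.2]⟩, hz.2]

lemma intervalIntegrable_deriv_sq_of_lipschitz {f : ℝ → ℝ} {C : ℝ≥0} (hf : LipschitzWith C f)
    (a b : ℝ) : IntervalIntegrable (fun x => deriv f x ^ 2) volume a b :=
  (intervalIntegrable_const (c := (C : ℝ) ^ 2)).mono_fun
    ((measurable_deriv f).pow_const 2).aestronglyMeasurable (.of_forall fun x => by
      simpa using pow_le_pow_left₀ (norm_nonneg _) (norm_deriv_le_of_lipschitz hf (x₀ := x)) 2)

theorem sq_mul_integral_sq_le_integral_deriv_sq_of_periodic {f : ℝ → ℝ} {C : ℝ≥0} {L : ℝ}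
    (hL : 0 < L) (hf : LipschitzWith C f) (hper : Periodic f (2 * L))
    (hzero : ∀ x, ∃ z ∈ Icc x (x + L), f z = 0) (a : ℝ) :
    (π / L) ^ 2 * ∫ x in a..(a + 2 * L), f x ^ 2 ≤ ∫ x in a..(a + 2 * L), deriv f x ^ 2 := by
  have hint : ∀ x y, IntervalIntegrable (fun t => f t ^ 2) volume x y := fun x y =>
    (hf.continuous.pow 2).intervalIntegrable x y
  have hint' := intervalIntegrable_deriv_sq_of_lipschitz hf
  have hwirtinger : ∀ x y, x ≤ y → y - x ≤ L → f x = 0 → f y = 0 →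
      (π / L) ^ 2 * ∫ t in x..y, f t ^ 2 ≤ ∫ t in x..y, deriv f t ^ 2 := fun x y hxy hyx =>
    sq_mul_integral_sq_le_integral_deriv_sq hxy (by positivity)
      (by rw [div_mul_eq_mul_div, div_le_iff₀ hL]; gcongr)
      (hf.lipschitzOnWith).absolutelyContinuousOnInterval (hint' x y)
  obtain ⟨a₀, -, ha₀⟩ := hzero 0
  obtain ⟨b, hbZ, c, hcZ, ⟨hab, hba⟩, ⟨hLc, hcL⟩, hcb⟩ :=
    exists_mem_subdivision (isClosed_singleton.preimage hf.continuous)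
      (fun x => (hzero x).imp fun z hz => ⟨hz.2, hz.1⟩) a₀
  have hshift := (hper.comp (· ^ 2)).intervalIntegral_add_eq a a₀
  have hshift' := ((periodic_deriv hper).comp (· ^ 2)).intervalIntegral_add_eq a a₀
  simp only [comp_apply] at hshift hshift'
  rw [hshift, hshift',
    ← intervalIntegral.integral_add_adjacent_intervals (hint a₀ b) (hint b _),
    ← intervalIntegral.integral_add_adjacent_intervals (hint b c) (hint c _),
    ← intervalIntegral.integral_add_adjacent_intervals (hint' a₀ b) (hint' b _),
    ← intervalIntegral.integral_add_adjacent_intervals (hint' b c) (hint' c _)]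
  linarith [hwirtinger a₀ b hab (by linarith) ha₀ hbZ, hwirtinger b c (by linarith) hcb hbZ hcZ,
    hwirtinger c (a₀ + 2 * L) hcL (by linarith) hcZ (by rw [hper, ha₀])]

end Wirtinger

section John

open Set Function

variable {K : Set E2}

/-- No linear image of the unit disk contained in `K` has larger area than the unit disk. Together
with `Metric.closedBall 0 1 ⊆ K` this says that the unit disk is the John ellipse of `K`. -/
def IsUnitDiskMaximal (K : Set E2) : Prop :=
  ∀ T : E2 →ₗ[ℝ] E2, Bijective T → T '' Metric.closedBall 0 1 ⊆ K → |LinearMap.det T| ≤ 1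

/-- The symmetric linear map with eigenvalue `α` in direction `unitVec m` and eigenvalue `β` in the
orthogonal direction. -/
def axialStretch (m α β : ℝ) : E2 →ₗ[ℝ] E2 :=
  Matrix.toLpLin 2 2
    !![α * cos m ^ 2 + β * sin m ^ 2, (α - β) * (cos m * sin m);
      (α - β) * (cos m * sin m), α * sin m ^ 2 + β * cos m ^ 2]

lemma det_axialStretch (m α β : ℝ) : LinearMap.det (axialStretch m α β) = α * β := by
  rw [axialStretch, Matrix.toLpLin_eq_toLin, LinearMap.det_toLin, Matrix.det_fin_two_of]
  linear_combination (α * β * (sin m ^ 2 + cos m ^ 2 + 1)) * sin_sq_add_cos_sq m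

lemma inner_axialStretch (m α β : ℝ) (y : E2) (θ : ℝ) :
    ⟪axialStretch m α β y, unitVec θ⟫ = α * cos (θ - m) * (y 0 * cos m + y 1 * sin m)
      + β * sin (θ - m) * (y 1 * cos m - y 0 * sin m) := by
  rw [inner_unitVec, cos_sub, sin_sub]
  simp [axialStretch, Matrix.toLpLin_apply, dotProduct, Fin.sum_univ_two]
  ring

lemma inner_axialStretch_sq_le (m α β : ℝ) {y : E2} (hy : ‖y‖ ≤ 1) (θ : ℝ) :
    ⟪axialStretch m α β y, unitVec θ⟫ ^ 2
      ≤ α ^ 2 * cos (θ - m) ^ 2 + β ^ 2 * sin (θ - m) ^ 2 := by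
  have hnorm : (y 0 * cos m + y 1 * sin m) ^ 2 + (y 1 * cos m - y 0 * sin m) ^ 2 = ‖y‖ ^ 2 := by
    rw [EuclideanSpace.real_norm_sq_eq, Fin.sum_univ_two]
    linear_combination (y 0 ^ 2 + y 1 ^ 2) * sin_sq_add_cos_sq m
  rw [inner_axialStretch]
  calc (α * cos (θ - m) * (y 0 * cos m + y 1 * sin m)
        + β * sin (θ - m) * (y 1 * cos m - y 0 * sin m)) ^ 2
      ≤ ((α * cos (θ - m)) ^ 2 + (β * sin (θ - m)) ^ 2)
        * ((y 0 * cos m + y 1 * sin m) ^ 2 + (y 1 * cos m - y 0 * sin m) ^ 2) := by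
        linarith [sq_nonneg (α * cos (θ - m) * (y 1 * cos m - y 0 * sin m)
          - β * sin (θ - m) * (y 0 * cos m + y 1 * sin m))]
    _ ≤ α ^ 2 * cos (θ - m) ^ 2 + β ^ 2 * sin (θ - m) ^ 2 := by
        rw [hnorm, ← mul_pow, ← mul_pow]
        exact mul_le_of_le_one_right (by positivity) (pow_le_one₀ (norm_nonneg y) hy)

lemma axialStretch_image_closedBall_subset (hK : IsCompact K) (hconv : Convex ℝ K) (h0 : 0 ∈ K)
    {m α β : ℝ}
    (hle : ∀ θ, α ^ 2 * cos (θ - m) ^ 2 + β ^ 2 * sin (θ - m) ^ 2 ≤ supportFun K θ ^ 2) :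
    axialStretch m α β '' Metric.closedBall 0 1 ⊆ K := by
  rintro _ ⟨y, hy, rfl⟩
  refine mem_of_inner_le_supportFun hK ⟨0, h0⟩ hconv fun θ =>
    le_of_sq_le_sq ?_ (supportFun_nonneg hK h0 θ)
  exact (inner_axialStretch_sq_le m α β (mem_closedBall_zero_iff.1 hy) θ).trans (hle θ)

lemma one_add_mul_le_of_periodic_pi {g : ℝ → ℝ} {m s w : ℝ} (hg : Periodic g π)
    (hg1 : ∀ θ, 1 ≤ g θ) (hs : 0 ≤ s) (hw : 0 ≤ w)
    (hgap : ∀ θ ∈ Icc (m - w) (m + w), 1 + s ≤ g θ) (θ : ℝ) :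
    1 + s * (cos (θ - m) ^ 2 - cos w ^ 2) ≤ g θ := by
  have hperiodic : Periodic (fun θ => g θ - s * cos (θ - m) ^ 2) π := fun θ => by
    simp only [hg θ, add_sub_right_comm, cos_add_pi, neg_sq]
  obtain ⟨ψ, hψ, heq⟩ := hperiodic.exists_mem_Ico pi_pos θ (m - π / 2)
  suffices 1 + s * (cos (ψ - m) ^ 2 - cos w ^ 2) ≤ g ψ by linarith
  rcases le_or_gt |ψ - m| w with hin | hout
  · rw [abs_le] at hin
    refine le_trans ?_ (hgap ψ ⟨by linarith, by linarith⟩)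
    nlinarith [cos_sq_le_one (ψ - m), sq_nonneg (cos w)]
  · have hψm : |ψ - m| ≤ π / 2 := abs_le.2 ⟨by linarith [hψ.1], by linarith [hψ.2]⟩
    have hcos : cos (ψ - m) ^ 2 ≤ cos w ^ 2 := by
      rw [← cos_abs (ψ - m)]
      exact pow_le_pow_left₀ (cos_nonneg_of_mem_Icc ⟨by linarith [abs_nonneg (ψ - m)], hψm⟩)
        (cos_le_cos_of_nonneg_of_le_pi hw (by linarith) hout.le) 2
    refine le_trans ?_ (hg1 ψ)
    linarith [mul_le_mul_of_nonneg_left hcos hs]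

namespace IsUnitDiskMaximal

lemma mul_le_one (hmax : IsUnitDiskMaximal K) (hK : IsCompact K) (hconv : Convex ℝ K)
    (h0 : 0 ∈ K) {m p q : ℝ} (hp : 0 < p) (hq : 0 < q)
    (hle : ∀ θ, p * cos (θ - m) ^ 2 + q * sin (θ - m) ^ 2 ≤ supportFun K θ ^ 2) : p * q ≤ 1 := by
  have hdet : LinearMap.det (axialStretch m √p √q) = √(p * q) := by
    rw [det_axialStretch, sqrt_mul hp.le]
  have hbij : Bijective (axialStretch m √p √q) := by
    rw [← Module.End.isUnit_iff, LinearMap.isUnit_iff_isUnit_det, hdet]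
    exact (sqrt_pos.2 (mul_pos hp hq)).ne'.isUnit
  have hle_one := hmax _ hbij (axialStretch_image_closedBall_subset hK hconv h0 (by
    simpa only [sq_sqrt hp.le, sq_sqrt hq.le] using hle))
  rwa [hdet, abs_of_nonneg (sqrt_nonneg _), sqrt_le_one] at hle_one

/-- If there were no contact direction, stretching the disk towards the middle of the interval and
shrinking it slightly less in the orthogonal direction would give a larger ellipse in `K`. -/
lemma exists_supportFun_eq_one_of_lt (hmax : IsUnitDiskMaximal K) (hK : IsCompact K)
    (hconv : Convex ℝ K) (hsym : K = -K) (hball : Metric.closedBall 0 1 ⊆ K) (m : ℝ) {w : ℝ}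
    (hw : π / 4 < w) (hw' : w ≤ π / 2) : ∃ θ ∈ Icc (m - w) (m + w), supportFun K θ = 1 := by
  have h0 : (0 : E2) ∈ K := hball (Metric.mem_closedBall_self zero_le_one)
  have h1 := one_le_supportFun hK hball
  by_contra! hno
  obtain ⟨μ, hμ, hgap⟩ : ∃ μ > 1, ∀ θ ∈ Icc (m - w) (m + w), μ ≤ supportFun K θ ^ 2 :=
    isCompact_Icc.exists_forall_le' ((continuous_supportFun hK ⟨0, h0⟩).pow 2).continuousOn
      fun θ hθ => one_lt_pow₀ ((h1 θ).lt_of_ne' (hno θ hθ)) two_ne_zero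
  have hcos_lt : cos w ^ 2 < sin w ^ 2 := by
    have hneg : cos (2 * w) < 0 :=
      cos_neg_of_pi_div_two_lt_of_lt (by linarith) (by linarith [pi_pos])
    rw [cos_two_mul'] at hneg
    linarith
  obtain ⟨s, hs0, hs⟩ := exists_between (lt_min (sub_pos.2 hcos_lt) (sub_pos.2 hμ))
  obtain ⟨hs_gain, hs_gap⟩ := lt_min_iff.1 hs
  have hle : ∀ θ, 1 + s * (cos (θ - m) ^ 2 - cos w ^ 2) ≤ supportFun K θ ^ 2 :=
    one_add_mul_le_of_periodic_pi (fun θ => congrArg (· ^ 2) (supportFun_periodic_pi hsym θ))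
      (fun θ => one_le_pow₀ (h1 θ)) hs0.le (by linarith [pi_pos])
      fun θ hθ => by linarith [hgap θ hθ]
  have hpq := hmax.mul_le_one hK hconv h0 (m := m) (p := 1 + s * sin w ^ 2)
    (q := 1 - s * cos w ^ 2) (by positivity) (by nlinarith [sin_sq_add_cos_sq w]) fun θ => by
      refine le_of_eq_of_le ?_ (hle θ)
      rw [sin_sq, sin_sq]
      ring
  have hle_one : sin w ^ 2 * cos w ^ 2 ≤ 1 :=
    mul_le_one₀ (sin_sq_le_one w) (sq_nonneg _) (cos_sq_le_one w)
  linarith [mul_pos hs0 (sub_pos.2 hs_gain), mul_le_mul_of_nonneg_left hle_one (sq_nonneg s)]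

lemma exists_supportFun_eq_one (hmax : IsUnitDiskMaximal K) (hK : IsCompact K)
    (hconv : Convex ℝ K) (hsym : K = -K) (hball : Metric.closedBall 0 1 ⊆ K) (x : ℝ) :
    ∃ θ ∈ Icc x (x + π / 2), supportFun K θ = 1 := by
  have hcontact := fun w => hmax.exists_supportFun_eq_one_of_lt hK hconv hsym hball (x + π / 4)
    (w := w)
  have hclosed : IsClosed {θ | supportFun K θ = 1} :=
    isClosed_eq (continuous_supportFun hK ⟨0, hball (by simp)⟩) continuous_const
  obtain ⟨θ, ⟨hθ, hθ1⟩, hmin⟩ := (isCompact_Icc.inter_right hclosed).exists_isMinOn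
    (hcontact (π / 2) (by linarith [pi_pos]) le_rfl)
    (f := fun θ => |θ - (x + π / 4)|) (by fun_prop)
  have hclose : |θ - (x + π / 4)| ≤ π / 4 := by
    by_contra! hfar
    have hθ2 : |θ - (x + π / 4)| ≤ π / 2 := abs_le.2 ⟨by linarith [hθ.1], by linarith [hθ.2]⟩
    obtain ⟨w, hw, hwθ⟩ := exists_between hfar
    obtain ⟨ψ, hψ, hψ1⟩ := hcontact w hw (by linarith)
    have hψw : |ψ - (x + π / 4)| ≤ w := abs_le.2 ⟨by linarith [hψ.1], by linarith [hψ.2]⟩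
    exact absurd (hmin ⟨⟨by linarith [hψ.1], by linarith [hψ.2]⟩, hψ1⟩) (by simp; linarith)
  rw [abs_le] at hclose
  exact ⟨θ, ⟨by linarith, by linarith⟩, hθ1⟩

end IsUnitDiskMaximal

end John

section AreaSum

open Set Function
open scoped NNReal

lemma sq_add_one_div_sq_le {x : ℝ} (hx : 1 ≤ x) : x ^ 2 + 1 / x ^ 2 ≤ 2 + 4 * (x - 1) ^ 2 := by
  have hsub : x - 1 / x ≤ 2 * (x - 1) := by
    have : 0 < x := by linarith
    field_simp
    nlinarith
  have hsub0 : 0 ≤ x - 1 / x := by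
    have : 1 / x ≤ 1 := (div_le_one (by linarith)).2 hx
    linarith
  have hexpand : x ^ 2 + 1 / x ^ 2 = 2 + (x - 1 / x) ^ 2 := by
    field_simp
    ring
  rw [hexpand]
  nlinarith

lemma integral_sq_sub_sq_deriv_add_one_div_sq_le {h : ℝ → ℝ} {C : ℝ≥0} (hh : LipschitzWith C h)
    (hper : Periodic h π) (h1 : ∀ θ, 1 ≤ h θ)
    (hcontact : ∀ x, ∃ θ ∈ Icc x (x + π / 2), h θ = 1) (a : ℝ) :
    ∫ θ in a..(a + π), (h θ ^ 2 - deriv h θ ^ 2 + 1 / h θ ^ 2) ≤ 2 * π := by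
  have hc := hh.continuous
  have hpos : ∀ θ, h θ ^ 2 ≠ 0 := fun θ => by have := h1 θ; positivity
  have hint : IntervalIntegrable (fun θ => deriv h θ ^ 2) volume a (a + π) :=
    intervalIntegrable_deriv_sq_of_lipschitz hh _ _
  have hwirtinger : 4 * ∫ θ in a..(a + π), (h θ - 1) ^ 2 ≤ ∫ θ in a..(a + π), deriv h θ ^ 2 := by
    have := sq_mul_integral_sq_le_integral_deriv_sq_of_periodic (half_pos pi_pos)
      (hh.sub (LipschitzWith.const (1 : ℝ)))
      (fun θ => by simp only [mul_div_cancel₀ π two_ne_zero, hper θ])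
      (fun x => (hcontact x).imp fun θ hθ => ⟨hθ.1, sub_eq_zero.2 hθ.2⟩) a
    rw [mul_div_cancel₀ _ two_ne_zero, div_div_cancel₀ pi_ne_zero] at this
    simp only [deriv_sub_const] at this
    linarith
  calc ∫ θ in a..(a + π), (h θ ^ 2 - deriv h θ ^ 2 + 1 / h θ ^ 2)
      ≤ ∫ θ in a..(a + π), (2 + 4 * (h θ - 1) ^ 2 - deriv h θ ^ 2) := by
        refine intervalIntegral.integral_mono_on (by linarith [pi_pos])
          ((((hc.pow 2).intervalIntegrable _ _).sub hint).add
            ((continuous_const.div (hc.pow 2) hpos).intervalIntegrable _ _))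
          ((Continuous.intervalIntegrable (by fun_prop) _ _).sub hint) fun θ _ => ?_
        linarith [sq_add_one_div_sq_le (h1 θ)]
    _ = 2 * π + 4 * (∫ θ in a..(a + π), (h θ - 1) ^ 2) - ∫ θ in a..(a + π), deriv h θ ^ 2 := by
        rw [intervalIntegral.integral_sub (Continuous.intervalIntegrable (by fun_prop) _ _) hint,
          intervalIntegral.integral_add intervalIntegrable_const
            (Continuous.intervalIntegrable (by fun_prop) _ _),
          intervalIntegral.integral_const_mul, intervalIntegral.integral_const, smul_eq_mul]
        ring
    _ ≤ 2 * π := by linarith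

theorem integral_sq_sub_sq_deriv_add_integral_one_div_sq_le {h : ℝ → ℝ} {C : ℝ≥0}
    (hh : LipschitzWith C h) (hper : Periodic h π) (h1 : ∀ θ, 1 ≤ h θ)
    (hcontact : ∀ x, ∃ θ ∈ Icc x (x + π / 2), h θ = 1) (a : ℝ) :
    (∫ θ in a..(a + 2 * π), (h θ ^ 2 - deriv h θ ^ 2))
      + ∫ θ in a..(a + 2 * π), 1 / h θ ^ 2 ≤ 4 * π := by
  have hpos : ∀ θ, h θ ^ 2 ≠ 0 := fun θ => by have := h1 θ; positivity
  have hc := hh.continuous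
  have hint : ∀ b c, IntervalIntegrable (fun θ => h θ ^ 2 - deriv h θ ^ 2) volume b c :=
    fun b c => ((hc.pow 2).intervalIntegrable b c).sub
      (intervalIntegrable_deriv_sq_of_lipschitz hh b c)
  have hint_inv : ∀ b c, IntervalIntegrable (fun θ => 1 / h θ ^ 2) volume b c :=
    (continuous_const.div (hc.pow 2) hpos).intervalIntegrable
  have hperiodic : Periodic (fun θ => h θ ^ 2 - deriv h θ ^ 2 + 1 / h θ ^ 2) π := fun θ => by
    simp only [hper θ, periodic_deriv hper θ]
  have hdouble := hperiodic.intervalIntegral_add_zsmul_eq 2 a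
    fun b c => (hint b c).add (hint_inv b c)
  simp only [zsmul_eq_mul, Int.cast_ofNat] at hdouble
  rw [← intervalIntegral.integral_add (hint _ _) (hint_inv _ _), hdouble]
  linarith [integral_sq_sub_sq_deriv_add_one_div_sq_le hh hper h1 hcontact a]

end AreaSum

/-- Theorem B (John case): if B² is the John ellipse of the o-symmetric convex body K,
then V(K) + V(K*) ≤ 2π. -/
theorem area_sum_bound_john
    (K : Set E2) (hKcomp : IsCompact K) (hKconv : Convex ℝ K)
    (hKint : (interior K).Nonempty) (hsym : K = -K)
    (hBK : Metric.closedBall (0 : E2) 1 ⊆ K)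
    (hJohn : ∀ T : E2 →ₗ[ℝ] E2, Function.Bijective T →
      ⇑T '' Metric.closedBall (0 : E2) 1 ⊆ K → |LinearMap.det T| ≤ 1) :
    volume K + volume (polarBody K) ≤ ENNReal.ofReal (2 * π) := by
  have h0 : (0 : E2) ∈ K := hBK (Metric.mem_closedBall_self zero_le_one)
  have hone := one_le_supportFun hKcomp hBK
  have hmax : IsUnitDiskMaximal K := hJohn
  obtain ⟨C, hC⟩ := exists_lipschitzWith_supportFun hKcomp ⟨0, h0⟩
  have harea := volume_le_integral_supportFun hKcomp h0 0
  have hpolar := volume_polarBody_le_integral_supportFun hKcomp ⟨0, h0⟩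
    (fun θ => one_pos.trans_le (hone θ)) 0
  have hvolume : 0 < volume K := Measure.measure_pos_of_nonempty_interior volume hKint
  have hsum := integral_sq_sub_sq_deriv_add_integral_one_div_sq_le hC
    (supportFun_periodic_pi hsym) hone
    (hmax.exists_supportFun_eq_one hKcomp hKconv hsym hBK) 0
  refine (add_le_add harea hpolar).trans ?_
  rw [← ENNReal.ofReal_add (ENNReal.ofReal_pos.1 (hvolume.trans_le harea)).le]
  · exact ENNReal.ofReal_le_ofReal (by linarith)
  · exact div_nonneg (intervalIntegral.integral_nonneg (by linarith [pi_pos])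
      fun θ _ => by positivity) zero_le_two
end
end

section
/- For every integer d ≥ 4, the regular cross-polytope circumscribed about the unit ball, D^d = {x ∈ ℝ^d : |x₁| + ⋯ + |x_d| ≤ √d}, satisfies V(D^d) > 2κ_d, where κ_d is the volume of the d-dimensional Euclidean unit ball. -/
open MeasureTheory Real
open scoped ENNReal

/-!
Both volumes are compared in steps of two dimensions. On the one hand `κ_{d+2} = 2π/(d+2) · κ_d`.
On the other hand `V(D^d) = (2√d)^d / d!`, and Bernoulli's inequality `(1 + 2/d)^{d/2} ≥ 2` gives
`V(D^{d+2}) ≥ 8/(d+1) · V(D^d)`. Since `π < 4`, the ratio `V(D^d) / κ_d` increases from `d` to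
`d + 2`, so it is enough that it exceeds `2` for `d = 4` and `d = 5`.
-/

section

open scoped Nat

/-- The regular cross-polytope in `ℝ^ι` with vertices `± r eᵢ`, i.e. the closed `ℓ¹`-ball of
radius `r`, as a subset of the Euclidean space that carries the Lebesgue measure. -/
def crosspolytope (ι : Type*) [Fintype ι] (r : ℝ) : Set (EuclideanSpace ℝ ι) :=
  {x | ∑ i, |x i| ≤ r}

/-- `V(D^d)`, where the cross-polytope `D^d` is circumscribed about the unit ball of `ℝ^d`: its
facets `∑ i, ± x i = √d` are at distance `1` from the origin. -/
noncomputable def circumscribedCrosspolytopeVolume (d : ℕ) : ℝ :=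
  volume.real (crosspolytope (Fin d) √d)

/-- `κ_d`, the volume of the Euclidean unit ball of `ℝ^d`, as a real number. -/
noncomputable def unitBallVolume (d : ℕ) : ℝ :=
  volume.real (Metric.closedBall (0 : EuclideanSpace ℝ (Fin d)) 1)

theorem volume_crosspolytope (ι : Type*) [Fintype ι] {r : ℝ} (hr : 0 ≤ r) :
    volume (crosspolytope ι r) =
      .ofReal ((2 * r) ^ Fintype.card ι / (Fintype.card ι)!) := by
  cases isEmpty_or_nonempty ι with
  | inl _ => simp [crosspolytope, hr, volume_euclideanSpace_eq_dirac]
  | inr _ =>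
    have volume_pi := volume_sum_rpow_le (ι := ι) le_rfl r
    simp only [rpow_one, div_one, one_add_one_eq_two, Gamma_two, mul_one,
      Gamma_nat_eq_factorial] at volume_pi
    calc volume (crosspolytope ι r) = volume {x : ι → ℝ | ∑ i, |x i| ≤ r} :=
          (EuclideanSpace.volume_preserving_symm_measurableEquiv_toLp ι).measure_preimage_equiv
            {x : ι → ℝ | ∑ i, |x i| ≤ r}
      _ = .ofReal ((2 * r) ^ Fintype.card ι / (Fintype.card ι)!) := by
        rw [volume_pi, ← ENNReal.ofReal_pow hr, ← ENNReal.ofReal_mul (by positivity)]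
        ring_nf

theorem circumscribedCrosspolytopeVolume_eq (d : ℕ) :
    circumscribedCrosspolytopeVolume d = (2 * √d) ^ d / d ! := by
  rw [circumscribedCrosspolytopeVolume, measureReal_def, volume_crosspolytope _ (sqrt_nonneg _),
    ENNReal.toReal_ofReal (by positivity), Fintype.card_fin]

theorem two_mul_sqrt_rpow_le_sqrt_add_two_rpow {x : ℝ} (hx : 2 ≤ x) :
    2 * √x ^ x ≤ √(x + 2) ^ x := by
  have hx₀ : 0 < x := by linarith
  have bernoulli : 2 ≤ (1 + 2 / x) ^ (x / 2) :=
    calc 2 = 1 + x / 2 * (2 / x) := by field_simp; norm_num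
      _ ≤ (1 + 2 / x) ^ (x / 2) :=
        one_add_mul_self_le_rpow_one_add (by linarith [div_pos two_pos hx₀]) (by linarith)
  rw [← rpow_div_two_eq_sqrt x hx₀.le, ← rpow_div_two_eq_sqrt x (by positivity)]
  calc 2 * x ^ (x / 2) ≤ (1 + 2 / x) ^ (x / 2) * x ^ (x / 2) := by gcongr
    _ = ((1 + 2 / x) * x) ^ (x / 2) := (mul_rpow (by positivity) hx₀.le).symm
    _ = (x + 2) ^ (x / 2) := by congr 1; field_simp

theorem mul_circumscribedCrosspolytopeVolume_le_add_two {d : ℕ} (hd : 2 ≤ d) :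
    8 / (d + 1) * circumscribedCrosspolytopeVolume d ≤
      circumscribedCrosspolytopeVolume (d + 2) := by
  have growth : 2 * √(d : ℝ) ^ d ≤ √((d : ℝ) + 2) ^ d := by
    exact_mod_cast two_mul_sqrt_rpow_le_sqrt_add_two_rpow (x := d) (by exact_mod_cast hd)
  have sq_sqrt_add_two : √((d : ℝ) + 2) ^ 2 = d + 2 := sq_sqrt (by positivity)
  simp only [circumscribedCrosspolytopeVolume_eq, Nat.factorial_succ, Nat.cast_mul, Nat.cast_add,
    Nat.cast_one, Nat.cast_ofNat]
  calc 8 / ((d : ℝ) + 1) * ((2 * √d) ^ d / d !)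
      = 4 * 2 ^ d / ((d + 1) * d !) * (2 * √d ^ d) := by
        rw [mul_pow]
        field_simp
        norm_num
    _ ≤ 4 * 2 ^ d / ((d + 1) * d !) * √(d + 2) ^ d := by gcongr
    _ = (2 * √(d + 2)) ^ (d + 2) / ((d + 1 + 1) * ((d + 1) * d !)) := by
      rw [mul_pow, pow_add √((d : ℝ) + 2), sq_sqrt_add_two]
      field_simp
      ring

theorem unitBallVolume_eq (d : ℕ) : unitBallVolume d = √π ^ d / Gamma (d / 2 + 1) := by
  have Gamma_pos : 0 < Gamma ((d : ℝ) / 2 + 1) := Gamma_pos_of_pos (by positivity)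
  cases d with
  | zero => simp [unitBallVolume, measureReal_def, volume_euclideanSpace_eq_dirac]
  | succ d =>
    rw [unitBallVolume, measureReal_def, EuclideanSpace.volume_closedBall, ENNReal.ofReal_one,
      one_pow, one_mul, Fintype.card_fin, ENNReal.toReal_ofReal (by positivity)]

theorem unitBallVolume_pos (d : ℕ) : 0 < unitBallVolume d :=
  ENNReal.toReal_pos (Metric.measure_closedBall_pos _ _ one_pos).ne' measure_closedBall_lt_top.ne

theorem unitBallVolume_add_two (d : ℕ) :
    unitBallVolume (d + 2) = 2 * π / (d + 2) * unitBallVolume d := by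
  have Gamma_step : Gamma (((d + 2 : ℕ) : ℝ) / 2 + 1) = (d / 2 + 1) * Gamma (d / 2 + 1) := by
    rw [← Gamma_add_one (by positivity)]
    push_cast
    ring_nf
  rw [unitBallVolume_eq, unitBallVolume_eq, Gamma_step, pow_add, sq_sqrt pi_pos.le]
  field_simp

theorem unitBallVolume_four : unitBallVolume 4 = π ^ 2 / 2 := by
  have unitBallVolume_two : unitBallVolume 2 = π := by
    simp [unitBallVolume, measureReal_def, pi_pos.le]
  rw [unitBallVolume_add_two 2, unitBallVolume_two]
  push_cast
  ring

theorem unitBallVolume_five : unitBallVolume 5 = 8 * π ^ 2 / 15 := by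
  have unitBallVolume_three : unitBallVolume 3 = π * 4 / 3 := by
    simp [unitBallVolume, measureReal_def, show 0 ≤ π * 4 / 3 by positivity]
  rw [unitBallVolume_add_two 3, unitBallVolume_three]
  push_cast
  ring

theorem volume_ratio_lt_volume_ratio_add_two {d : ℕ} (hd : 2 ≤ d) :
    circumscribedCrosspolytopeVolume d / unitBallVolume d <
      circumscribedCrosspolytopeVolume (d + 2) / unitBallVolume (d + 2) := by
  have ball_pos := unitBallVolume_pos d
  have crosspolytope_pos : 0 < circumscribedCrosspolytopeVolume d := by
    rw [circumscribedCrosspolytopeVolume_eq]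
    positivity
  have factor_lt : 2 * π / (d + 2) < 8 / ((d : ℝ) + 1) := by
    gcongr ?_ / ?_ <;> linarith [pi_lt_four]
  rw [div_lt_div_iff₀ ball_pos (unitBallVolume_pos _)]
  calc circumscribedCrosspolytopeVolume d * unitBallVolume (d + 2)
      = 2 * π / (d + 2) * circumscribedCrosspolytopeVolume d * unitBallVolume d := by
        rw [unitBallVolume_add_two]
        ring
    _ < 8 / (d + 1) * circumscribedCrosspolytopeVolume d * unitBallVolume d := by gcongr
    _ ≤ circumscribedCrosspolytopeVolume (d + 2) * unitBallVolume d := by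
        gcongr
        exact mul_circumscribedCrosspolytopeVolume_le_add_two hd

theorem pi_sq_lt_ten : π ^ 2 < 10 := by
  nlinarith [pi_lt_d2, pi_pos]

theorem two_lt_volume_ratio_four :
    2 < circumscribedCrosspolytopeVolume 4 / unitBallVolume 4 := by
  have crosspolytope_four : circumscribedCrosspolytopeVolume 4 = 32 / 3 := by
    have sqrt_four : √(4 : ℝ) = 2 := (sqrt_eq_iff_mul_self_eq_of_pos two_pos).2 (by norm_num)
    rw [circumscribedCrosspolytopeVolume_eq, Nat.cast_ofNat, sqrt_four]
    norm_num [Nat.factorial]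
  rw [lt_div_iff₀ (unitBallVolume_pos 4), unitBallVolume_four, crosspolytope_four]
  linarith [pi_sq_lt_ten]

theorem two_lt_volume_ratio_five :
    2 < circumscribedCrosspolytopeVolume 5 / unitBallVolume 5 := by
  have crosspolytope_five : circumscribedCrosspolytopeVolume 5 = 20 / 3 * √5 := by
    have sqrt_five_sq : √(5 : ℝ) ^ 2 = 5 := sq_sqrt (by norm_num)
    rw [circumscribedCrosspolytopeVolume_eq, Nat.cast_ofNat]
    calc (2 * √5) ^ 5 / (5 ! : ℝ) = 32 * (√5 ^ 2) ^ 2 * √5 / 120 := by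
          simp only [Nat.factorial]
          ring
      _ = 20 / 3 * √5 := by rw [sqrt_five_sq]; ring
  have two_le_sqrt_five : 2 ≤ √(5 : ℝ) := le_sqrt_of_sq_le (by norm_num)
  rw [lt_div_iff₀ (unitBallVolume_pos 5), unitBallVolume_five, crosspolytope_five]
  linarith [pi_sq_lt_ten]

theorem two_lt_volume_ratio {d : ℕ} (hd : 4 ≤ d) :
    2 < circumscribedCrosspolytopeVolume d / unitBallVolume d := by
  obtain ⟨n, rfl⟩ := Nat.exists_eq_add_of_le' hd
  induction n using Nat.twoStepInduction with
  | zero => exact two_lt_volume_ratio_four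
  | one => exact two_lt_volume_ratio_five
  | more n ih _ =>
    exact (ih (by lia)).trans (volume_ratio_lt_volume_ratio_add_two (d := n + 4) (by lia))

end

/-- For d ≥ 4, the regular cross-polytope circumscribed about the unit ball has
volume greater than twice the volume of the unit ball. -/
theorem crosspolytope_volume_gt_two_ball
    (d : ℕ) (hd : 4 ≤ d)
    (D : Set (EuclideanSpace ℝ (Fin d)))
    (hD : D = {x : EuclideanSpace ℝ (Fin d) | ∑ i, |x i| ≤ Real.sqrt d}) :
    2 * volume (Metric.closedBall (0 : EuclideanSpace ℝ (Fin d)) 1) < volume D := by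
  have hlt : 2 * unitBallVolume d < circumscribedCrosspolytopeVolume d :=
    (lt_div_iff₀ (unitBallVolume_pos d)).1 (two_lt_volume_ratio hd)
  have crosspolytope_ne_top : volume (crosspolytope (Fin d) √d) ≠ ∞ := by
    simp [volume_crosspolytope _ (sqrt_nonneg _)]
  have ball_ne_top : 2 * volume (Metric.closedBall (0 : EuclideanSpace ℝ (Fin d)) 1) ≠ ∞ :=
    ENNReal.mul_ne_top ENNReal.ofNat_ne_top measure_closedBall_lt_top.ne
  change D = crosspolytope (Fin d) √d at hD
  rw [hD, ← ENNReal.toReal_lt_toReal ball_ne_top crosspolytope_ne_top, ENNReal.toReal_mul]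
  exact hlt
end
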